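/- arXiv:1302.4151 — 5 statements merged into one kernel-verified Lean document; each statement's English description precedes it below -/
import Mathlib

section
/- Let R be a commutative Noetherian ring and let f : X → Y be a morphism of chain complexes of R-modules such that the homology modules H_i(X) and H_i(Y) are finitely generated over R for all i. Let x_1, …, x_n be a sequence of elements of the Jacobson radical of R and let K = K^R(x_1,…,x_n) be the Koszul complex on this sequence. Then f is a quasi-isomorphism if and only if the induced morphism K ⊗_R f : K ⊗_R X → K ⊗_R Y is a quasi-isomorphism. -/
universe u

open CategoryTheory CategoryTheory.Limits MonoidalCategory

instance curriedTensorAdditive (C : Type*) [Category C] [MonoidalCategory C] [Preadditive C]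
    [MonoidalPreadditive C] : (curriedTensor C).Additive where
  map_add := by
    intros
    ext : 2
    apply MonoidalPreadditive.add_whiskerRight

instance curriedTensorObjAdditive (C : Type*) [Category C] [MonoidalCategory C] [Preadditive C]
    [MonoidalPreadditive C] (X : C) : ((curriedTensor C).obj X).Additive where
  map_add := by
    intros
    apply MonoidalPreadditive.whiskerLeft_add

/-- The Koszul complex `K^R(x₁, …, xₙ)` on a list of elements of `R`, realized as a complex of
`R`-modules via the standard inductive description: `K^R() = R` concentrated in degree `0`, and
`K^R(x :: xs)` is the mapping cone of multiplication by `x` on `K^R(xs)`. -/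
noncomputable def koszulComplex (R : Type u) [CommRing R] :
    List R → CochainComplex (ModuleCat.{u} R) ℤ
  | [] => (CochainComplex.singleFunctor (ModuleCat.{u} R) 0).obj (ModuleCat.of R R)
  | x :: xs => CochainComplex.mappingCone (x • 𝟙 (koszulComplex R xs))

open CochainComplex HomComplex HomologicalComplex

section
variable {R : Type u} [CommRing R]

/-- The cochain `γ ⊗ X`. -/
noncomputable def cochainTensor {K L : CochainComplex (ModuleCat.{u} R) ℤ} {n : ℤ}
    (γ : Cochain K L n) (X : CochainComplex (ModuleCat.{u} R) ℤ) :
    Cochain (HomologicalComplex.tensorObj K X) (HomologicalComplex.tensorObj L X) n :=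
  Cochain.mk fun p q hpq => mapBifunctorDesc (fun i₁ i₂ h =>
    (γ.v i₁ (i₁ + n) rfl ▷ X.X i₂) ≫
      ιTensorObj L X (i₁ + n) i₂ q (by
        have h : i₁ + i₂ = p := h
        lia))

lemma ι_cochainTensor {K L : CochainComplex (ModuleCat.{u} R) ℤ} {n : ℤ}
    (γ : Cochain K L n) (X : CochainComplex (ModuleCat.{u} R) ℤ) (p q : ℤ) (hpq : p + n = q)
    (i₁ i₂ j₁ : ℤ) (h : i₁ + i₂ = p) (hj : i₁ + n = j₁) :
    ιTensorObj K X i₁ i₂ p h ≫ (cochainTensor γ X).v p q hpq =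
      (γ.v i₁ j₁ hj ▷ X.X i₂) ≫ ιTensorObj L X j₁ i₂ q (by lia) := by
  subst hj
  exact ι_mapBifunctorDesc (K₁ := K) (K₂ := X) (F := curriedTensor (ModuleCat.{u} R))
    (c := ComplexShape.up ℤ) _ i₁ i₂ h

lemma tensor_hom_ext {K X : CochainComplex (ModuleCat.{u} R) ℤ} {Z : ModuleCat.{u} R} {p : ℤ}
    {f g : (HomologicalComplex.tensorObj K X).X p ⟶ Z}
    (h : ∀ (i₁ i₂ : ℤ) (h : i₁ + i₂ = p),
      ιTensorObj K X i₁ i₂ p h ≫ f = ιTensorObj K X i₁ i₂ p h ≫ g) : f = g :=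
  mapBifunctor.hom_ext h

lemma ι_tensorHom' {K L X Y : CochainComplex (ModuleCat.{u} R) ℤ} (φ : K ⟶ L) (f : X ⟶ Y)
    (i₁ i₂ p : ℤ) (h : i₁ + i₂ = p) :
    ιTensorObj K X i₁ i₂ p h ≫ (HomologicalComplex.tensorHom φ f).f p =
      (φ.f i₁ ▷ X.X i₂) ≫ (L.X i₁ ◁ f.f i₂) ≫ ιTensorObj L Y i₁ i₂ p h :=
  ι_mapBifunctorMap _ _ _ _ _ _ _ _

lemma ι_tensorHom'_assoc {K L X Y : CochainComplex (ModuleCat.{u} R) ℤ} (φ : K ⟶ L) (f : X ⟶ Y)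
    (i₁ i₂ p : ℤ) (h : i₁ + i₂ = p) {Z : ModuleCat.{u} R}
    (g : (HomologicalComplex.tensorObj L Y).X p ⟶ Z) :
    ιTensorObj K X i₁ i₂ p h ≫ (HomologicalComplex.tensorHom φ f).f p ≫ g =
      (φ.f i₁ ▷ X.X i₂) ≫ (L.X i₁ ◁ f.f i₂) ≫ ιTensorObj L Y i₁ i₂ p h ≫ g := by
  rw [← Category.assoc, ι_tensorHom', Category.assoc, Category.assoc]

lemma ι_tensor_d {K X : CochainComplex (ModuleCat.{u} R) ℤ}
    (i₁ i₂ j₁ j₂ p q : ℤ) (h : i₁ + i₂ = p) (hq : p + 1 = q) (h₁ : i₁ + 1 = j₁)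
    (h₂ : i₂ + 1 = j₂) :
    ιTensorObj K X i₁ i₂ p h ≫ (HomologicalComplex.tensorObj K X).d p q =
      (K.d i₁ j₁ ▷ X.X i₂) ≫ ιTensorObj K X j₁ i₂ q (by lia) +
      i₁.negOnePow • ((K.X i₁ ◁ X.d i₂ j₂) ≫ ιTensorObj K X i₁ j₂ q (by lia)) := by
  rw [mapBifunctor.d_eq, Preadditive.comp_add, mapBifunctor.ι_D₁, mapBifunctor.ι_D₂]
  have h1 : (ComplexShape.up ℤ).Rel i₁ j₁ := by simpa
  have h2 : (ComplexShape.up ℤ).Rel i₂ j₂ := by simpa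
  rw [mapBifunctor.d₁_eq K X (curriedTensor (ModuleCat.{u} R)) (ComplexShape.up ℤ) h1 i₂ q
      (show j₁ + i₂ = q by lia),
    mapBifunctor.d₂_eq K X (curriedTensor (ModuleCat.{u} R)) (ComplexShape.up ℤ) i₁ h2 q
      (show i₁ + j₂ = q by lia)]
  simp

lemma cochainTensor_comp {K L M : CochainComplex (ModuleCat.{u} R) ℤ} {n m k : ℤ}
    (γ : Cochain K L n) (γ' : Cochain L M m) (h : n + m = k)
    (X : CochainComplex (ModuleCat.{u} R) ℤ) :
    cochainTensor (γ.comp γ' h) X = (cochainTensor γ X).comp (cochainTensor γ' X) h := by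
  ext p q hpq : 1
  apply tensor_hom_ext
  intro i₁ i₂ hi
  rw [Cochain.comp_v _ _ h p (p + n) q rfl (by lia), ι_cochainTensor _ _ _ _ _ _ _ _ _ rfl,
    ← Category.assoc, ι_cochainTensor _ _ _ _ _ _ _ _ _ rfl, Category.assoc,
    ι_cochainTensor _ _ _ _ _ _ _ (i₁ + k) _ (by lia),
    Cochain.comp_v _ _ h i₁ (i₁ + n) _ rfl (by lia), comp_whiskerRight, Category.assoc]

lemma cochainTensor_add {K L : CochainComplex (ModuleCat.{u} R) ℤ} {n : ℤ}
    (γ γ' : Cochain K L n) (X : CochainComplex (ModuleCat.{u} R) ℤ) :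
    cochainTensor (γ + γ') X = cochainTensor γ X + cochainTensor γ' X := by
  ext p q hpq : 1
  apply tensor_hom_ext
  intro i₁ i₂ hi
  rw [Cochain.add_v, Preadditive.comp_add]
  simp only [ι_cochainTensor _ _ _ _ _ _ _ _ _ rfl]
  rw [Cochain.add_v, MonoidalPreadditive.add_whiskerRight, Preadditive.add_comp]

lemma cochainTensor_zero {K L : CochainComplex (ModuleCat.{u} R) ℤ} {n : ℤ}
    (X : CochainComplex (ModuleCat.{u} R) ℤ) :
    cochainTensor (0 : Cochain K L n) X = 0 := by
  have := cochainTensor_add (0 : Cochain K L n) 0 X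
  simpa using this

lemma cochainTensor_ofHom {K L : CochainComplex (ModuleCat.{u} R) ℤ} (φ : K ⟶ L)
    (X : CochainComplex (ModuleCat.{u} R) ℤ) :
    cochainTensor (Cochain.ofHom φ) X =
      Cochain.ofHom (HomologicalComplex.tensorHom φ (𝟙 X)) := by
  ext p : 1
  apply tensor_hom_ext
  intro i₁ i₂ hi
  rw [ι_cochainTensor _ _ _ _ _ _ _ i₁ _ (by lia), Cochain.ofHom_v, Cochain.ofHom_v,
    ι_tensorHom']
  simp

lemma δ_cochainTensor {K L : CochainComplex (ModuleCat.{u} R) ℤ} {n m : ℤ} (h : n + 1 = m)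
    (γ : Cochain K L n) (X : CochainComplex (ModuleCat.{u} R) ℤ) :
    δ n m (cochainTensor γ X) = cochainTensor (δ n m γ) X := by
  ext p q hpq : 1
  apply tensor_hom_ext
  intro i₁ i₂ hi
  rw [δ_v n m h _ p q hpq (p + n) (p + 1) (by lia) rfl, Preadditive.comp_add,
    ι_cochainTensor _ _ _ _ _ _ _ _ _ rfl,
    δ_v n m h _ i₁ (i₁ + m) rfl (i₁ + n) (i₁ + 1) (by lia) rfl,
    ← Category.assoc, ι_cochainTensor _ _ _ _ _ _ _ _ _ rfl, Linear.comp_units_smul,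
    ← Category.assoc, ι_tensor_d i₁ i₂ (i₁ + 1) (i₂ + 1) _ _ _ rfl rfl rfl, Category.assoc,
    ι_tensor_d (i₁ + n) i₂ (i₁ + m) (i₂ + 1) _ _ _ (by lia) (by lia) rfl]
  simp only [Preadditive.add_comp, Preadditive.comp_add, Linear.units_smul_comp,
    Linear.comp_units_smul, Category.assoc, smul_add]
  rw [ι_cochainTensor _ _ _ _ _ _ _ (i₁ + m) _ (by lia),
    ι_cochainTensor _ _ _ _ _ _ _ (i₁ + n) _ (by lia)]
  have hs : ∀ {A B : ModuleCat.{u} R} (e : ℤˣ) (f : A ⟶ B) (Z : ModuleCat.{u} R),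
      (e • f) ▷ Z = e • (f ▷ Z) := by
    intro A B e f Z
    obtain rfl | rfl := Int.units_eq_one_or e
    · simp
    · have h0 := MonoidalPreadditive.add_whiskerRight (f := f) (g := -f) (X := Z)
      rw [add_neg_cancel, MonoidalPreadditive.zero_whiskerRight] at h0
      simp only [Units.neg_smul, one_smul]
      exact (neg_eq_of_add_eq_zero_right h0.symm).symm
  rw [MonoidalPreadditive.add_whiskerRight, hs, Preadditive.add_comp, comp_whiskerRight,
    comp_whiskerRight, Linear.units_smul_comp, Category.assoc, Category.assoc,
    ← whisker_exchange_assoc, smul_smul, Int.negOnePow_add i₁]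
  have e : m.negOnePow * i₁.negOnePow = - (i₁.negOnePow * n.negOnePow) := by
    rw [← h, Int.negOnePow_succ, neg_mul, mul_comm]
  rw [e, Units.neg_smul (i₁.negOnePow * n.negOnePow)]
  abel

lemma tensorHom_smul_id (x : R) (K X : CochainComplex (ModuleCat.{u} R) ℤ) :
    HomologicalComplex.tensorHom (x • 𝟙 K) (𝟙 X) = x • 𝟙 (HomologicalComplex.tensorObj K X) := by
  ext p : 1
  apply tensor_hom_ext
  intro i₁ i₂ hi
  rw [ι_tensorHom']
  simp

end

section
variable {R : Type u} [CommRing R]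

lemma cochainTensor_v_comp {K L M : CochainComplex (ModuleCat.{u} R) ℤ} {n m k : ℤ}
    (γ : Cochain K L n) (γ' : Cochain L M m) (h : n + m = k)
    (X : CochainComplex (ModuleCat.{u} R) ℤ) (p q r : ℤ) (hpq : p + n = q) (hqr : q + m = r) :
    (cochainTensor γ X).v p q hpq ≫ (cochainTensor γ' X).v q r hqr =
      (cochainTensor (γ.comp γ' h) X).v p r (by lia) := by
  rw [cochainTensor_comp, Cochain.comp_v _ _ h p q r hpq hqr]

lemma cochainTensor_id_v (K X : CochainComplex (ModuleCat.{u} R) ℤ) (p : ℤ) :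
    (cochainTensor (Cochain.ofHom (𝟙 K)) X).v p p (by simp) = 𝟙 _ := by
  rw [cochainTensor_ofHom, Cochain.ofHom_v]
  apply tensor_hom_ext
  intro i₁ i₂ hi
  rw [ι_tensorHom']
  simp

/-- cone commutes with tensor: forward map -/
noncomputable def coneTensorHom {K L : CochainComplex (ModuleCat.{u} R) ℤ} (φ : K ⟶ L)
    (X : CochainComplex (ModuleCat.{u} R) ℤ) :
    mappingCone (HomologicalComplex.tensorHom φ (𝟙 X)) ⟶
      HomologicalComplex.tensorObj (mappingCone φ) X :=
  mappingCone.desc _ (cochainTensor (mappingCone.inl φ) X)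
    (HomologicalComplex.tensorHom (mappingCone.inr φ) (𝟙 X)) (by
      rw [δ_cochainTensor (by lia), mappingCone.δ_inl, Cochain.ofHom_comp, cochainTensor_comp,
        cochainTensor_ofHom, cochainTensor_ofHom, Cochain.ofHom_comp])

/-- cone commutes with tensor: backward map -/
noncomputable def coneTensorInv {K L : CochainComplex (ModuleCat.{u} R) ℤ} (φ : K ⟶ L)
    (X : CochainComplex (ModuleCat.{u} R) ℤ) :
    HomologicalComplex.tensorObj (mappingCone φ) X ⟶
    mappingCone (HomologicalComplex.tensorHom φ (𝟙 X)) :=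
  mappingCone.lift _ (Cocycle.mk (cochainTensor (mappingCone.fst φ).1 X) 2 (by lia) (by
      rw [δ_cochainTensor (by lia), (mappingCone.fst φ).δ_eq_zero, cochainTensor_zero]))
    (cochainTensor (mappingCone.snd φ) X) (by
      rw [δ_cochainTensor (by lia), mappingCone.δ_snd, ← cochainTensor_ofHom]
      change _ + (cochainTensor (mappingCone.fst φ).1 X).comp _ _ = 0
      rw [← cochainTensor_comp, ← cochainTensor_add]
      simp [cochainTensor_zero])

lemma coneTensor_hom_inv {K L : CochainComplex (ModuleCat.{u} R) ℤ} (φ : K ⟶ L)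
    (X : CochainComplex (ModuleCat.{u} R) ℤ) :
    coneTensorHom φ X ≫ coneTensorInv φ X = 𝟙 _ := by
  ext p : 1
  apply mappingCone.ext_from _ (p + 1) p rfl
  all_goals apply mappingCone.ext_to _ p (p + 1) rfl
  · simp [coneTensorHom, coneTensorInv]
    rw [cochainTensor_v_comp _ _ (by lia : (-1 : ℤ) + 1 = 0), mappingCone.inl_fst,
      cochainTensor_id_v]
  · simp [coneTensorHom, coneTensorInv]
    rw [cochainTensor_v_comp _ _ (by lia : (-1 : ℤ) + 0 = -1), mappingCone.inl_snd,
      cochainTensor_zero, Cochain.zero_v]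
  · simp [coneTensorHom, coneTensorInv]
    rw [← Cochain.ofHom_v, ← cochainTensor_ofHom,
      cochainTensor_v_comp _ _ (by lia : (0 : ℤ) + 1 = 1), mappingCone.inr_fst,
      cochainTensor_zero, Cochain.zero_v]
  · simp [coneTensorHom, coneTensorInv]
    rw [← Cochain.ofHom_v, ← cochainTensor_ofHom,
      cochainTensor_v_comp _ _ (by lia : (0 : ℤ) + 0 = 0), mappingCone.inr_snd,
      cochainTensor_id_v]

lemma coneTensor_inv_hom {K L : CochainComplex (ModuleCat.{u} R) ℤ} (φ : K ⟶ L)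
    (X : CochainComplex (ModuleCat.{u} R) ℤ) :
    coneTensorInv φ X ≫ coneTensorHom φ X = 𝟙 _ := by
  ext p : 1
  rw [HomologicalComplex.comp_f, coneTensorInv, coneTensorHom,
    mappingCone.lift_desc_f _ _ _ _ _ _ _ p (p + 1) rfl, HomologicalComplex.id_f,
    ← cochainTensor_id_v, ← mappingCone.id, cochainTensor_add, Cochain.add_v]
  congr 1
  · exact cochainTensor_v_comp _ _ _ _ _ _ _ _ _
  · rw [← cochainTensor_v_comp _ _ _ _ p p p (by lia) (by lia), cochainTensor_ofHom,
      Cochain.ofHom_v]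

/-- cone commutes with tensor -/
noncomputable def coneTensorIso {K L : CochainComplex (ModuleCat.{u} R) ℤ} (φ : K ⟶ L)
    (X : CochainComplex (ModuleCat.{u} R) ℤ) :
    mappingCone (HomologicalComplex.tensorHom φ (𝟙 X)) ≅
      HomologicalComplex.tensorObj (mappingCone φ) X where
  hom := coneTensorHom φ X
  inv := coneTensorInv φ X
  hom_inv_id := coneTensor_hom_inv φ X
  inv_hom_id := coneTensor_inv_hom φ X

lemma coneTensor_comm {K L X Y : CochainComplex (ModuleCat.{u} R) ℤ} (φ : K ⟶ L)
    {f : X ⟶ Y} :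
    HomologicalComplex.tensorHom φ (𝟙 X) ≫ HomologicalComplex.tensorHom (𝟙 L) f =
      HomologicalComplex.tensorHom (𝟙 K) f ≫ HomologicalComplex.tensorHom φ (𝟙 Y) := by
  ext p : 1
  apply tensor_hom_ext
  intro i₁ i₂ hi
  simp only [HomologicalComplex.comp_f]
  rw [ι_tensorHom'_assoc, ι_tensorHom'_assoc, ι_tensorHom', ι_tensorHom']
  simp [whisker_exchange_assoc]

lemma coneTensorHom_naturality {K L X Y : CochainComplex (ModuleCat.{u} R) ℤ} (φ : K ⟶ L)
    (f : X ⟶ Y) :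
    coneTensorHom φ X ≫ HomologicalComplex.tensorHom (𝟙 (mappingCone φ)) f =
      mappingCone.map _ _ (HomologicalComplex.tensorHom (𝟙 K) f)
        (HomologicalComplex.tensorHom (𝟙 L) f) (coneTensor_comm φ) ≫ coneTensorHom φ Y := by
  ext p : 1
  apply mappingCone.ext_from _ (p + 1) p rfl
  · simp [coneTensorHom, mappingCone.map]
    apply tensor_hom_ext
    intro i₁ i₂ hi
    rw [← Category.assoc, ι_cochainTensor _ _ _ _ _ _ _ _ _ rfl, Category.assoc, ι_tensorHom',
      ι_tensorHom'_assoc]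
    rw [ι_cochainTensor _ _ _ _ _ _ _ _ _ rfl]
    simp [whisker_exchange_assoc]
  · simp [coneTensorHom, mappingCone.map]
    have := congr_arg (fun g => g.f p) (coneTensor_comm (mappingCone.inr φ) (f := f))
    simpa using this

end

section
variable {R : Type u} [CommRing R]

lemma nak_inj {P M P' Q N Q' : Type*} [AddCommGroup P] [AddCommGroup M] [AddCommGroup P']
    [AddCommGroup Q] [AddCommGroup N] [AddCommGroup Q'] [Module R P] [Module R M] [Module R P']
    [Module R Q] [Module R N] [Module R Q'] [IsNoetherianRing R] [Module.Finite R M]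
    (x : R) (hx : x ∈ Ideal.jacobson (⊥ : Ideal R))
    (b : P →ₗ[R] M) (a : M →ₗ[R] P') (b' : Q →ₗ[R] N) (a' : N →ₗ[R] Q')
    (g : M →ₗ[R] N) (h : P →ₗ[R] Q) (h' : P' →ₗ[R] Q')
    (hb : ∀ p, x • b p = 0) (ha : ∀ m, a m = 0 → ∃ m', x • m' = m)
    (hb' : ∀ n, x • n = 0 → ∃ q, b' q = n)
    (c : ∀ p, g (b p) = b' (h p)) (c' : ∀ m, h' (a m) = a' (g m))
    (hh : Function.Surjective h) (hh' : Function.Injective h') : Function.Injective g := by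
  rw [← LinearMap.ker_eq_bot]
  have hfg : (LinearMap.ker g).FG := IsNoetherian.noetherian _
  refine Submodule.eq_bot_of_le_smul_of_le_jacobson_bot (Ideal.span {x}) _ hfg ?_ ?_
  · intro m hm
    have hm : g m = 0 := hm
    obtain ⟨m', rfl⟩ := ha m (hh' (by rw [c', hm, map_zero, map_zero]))
    obtain ⟨q, hq⟩ := hb' (g m') (by rw [← map_smul, hm])
    obtain ⟨p, rfl⟩ := hh q
    have : x • m' = x • (m' - b p) := by rw [smul_sub, hb, sub_zero]
    rw [this]
    refine Submodule.smul_mem_smul (Ideal.mem_span_singleton_self x) ?_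
    rw [LinearMap.mem_ker, map_sub, c, hq, sub_self]
  · rwa [Ideal.span_singleton_le_iff_mem]

lemma nak_surj {P M M' Q N N' : Type*} [AddCommGroup P] [AddCommGroup M] [AddCommGroup M']
    [AddCommGroup Q] [AddCommGroup N] [AddCommGroup N'] [Module R P] [Module R M] [Module R M']
    [Module R Q] [Module R N] [Module R N'] [Module.Finite R N]
    (x : R) (hx : x ∈ Ideal.jacobson (⊥ : Ideal R))
    (a : M →ₗ[R] P) (b : P →ₗ[R] M') (a' : N →ₗ[R] Q) (b' : Q →ₗ[R] N')
    (g : M →ₗ[R] N) (h : P →ₗ[R] Q) (g' : M' →ₗ[R] N')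
    (hb : ∀ p, b p = 0 → ∃ m, a m = p) (hab : ∀ n, b' (a' n) = 0)
    (ha' : ∀ n, a' n = 0 → ∃ n', x • n' = n)
    (c : ∀ m, h (a m) = a' (g m)) (c' : ∀ p, g' (b p) = b' (h p))
    (hh : Function.Surjective h) (hg' : Function.Injective g') : Function.Surjective g := by
  rw [← LinearMap.range_eq_top, ← top_le_iff]
  refine Submodule.le_of_le_smul_of_le_jacobson_bot (I := Ideal.span {x}) Module.Finite.fg_top
    ?_ ?_
  · rwa [Ideal.span_singleton_le_iff_mem]
  · intro n _
    obtain ⟨p, hp⟩ := hh (a' n)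
    obtain ⟨m, rfl⟩ := hb p (hg' (by rw [c', hp, hab, map_zero]))
    obtain ⟨n', hn'⟩ := ha' (n - g m) (by rw [map_sub, ← c, hp, sub_self])
    rw [← sub_add_cancel n (g m), ← hn', add_comm]
    exact Submodule.add_mem_sup ⟨m, rfl⟩
      (Submodule.smul_mem_smul (Ideal.mem_span_singleton_self x) trivial)

open HomotopyCategory in
/-- homology of a complex, through the homotopy category -/
noncomputable abbrev hH (n : ℤ) (A : CochainComplex (ModuleCat.{u} R) ℤ) : ModuleCat.{u} R :=
  (HomotopyCategory.homologyFunctor (ModuleCat.{u} R) (ComplexShape.up ℤ) n).obj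
    ((HomotopyCategory.quotient _ _).obj A)

/-- map on homology, through the homotopy category -/
noncomputable abbrev hMap (n : ℤ) {A B : CochainComplex (ModuleCat.{u} R) ℤ} (f : A ⟶ B) :
    hH n A ⟶ hH n B :=
  (HomotopyCategory.homologyFunctor (ModuleCat.{u} R) (ComplexShape.up ℤ) n).map
    ((HomotopyCategory.quotient _ _).map f)

/-- comparison iso -/
noncomputable def hIso (n : ℤ) (A : CochainComplex (ModuleCat.{u} R) ℤ) :
    hH n A ≅ A.homology n :=
  (HomotopyCategory.homologyFunctorFactors (ModuleCat.{u} R) (ComplexShape.up ℤ) n).app A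

lemma hMap_hIso (n : ℤ) {A B : CochainComplex (ModuleCat.{u} R) ℤ} (f : A ⟶ B) :
    hMap n f ≫ (hIso n B).hom = (hIso n A).hom ≫ HomologicalComplex.homologyMap f n :=
  (HomotopyCategory.homologyFunctorFactors (ModuleCat.{u} R) (ComplexShape.up ℤ) n).hom.naturality f

lemma quasiIso_iff_hMap {A B : CochainComplex (ModuleCat.{u} R) ℤ} (f : A ⟶ B) :
    QuasiIso f ↔ ∀ n, Function.Bijective (hMap n f) := by
  rw [quasiIso_iff]
  refine forall_congr' fun n => ?_
  rw [quasiIsoAt_iff_isIso_homologyMap, ← ConcreteCategory.isIso_iff_bijective]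
  have : HomologicalComplex.homologyMap f n = (hIso n A).inv ≫ hMap n f ≫ (hIso n B).hom := by
    rw [hMap_hIso]; simp
  rw [this]
  simp

lemma finite_hH_iff (n : ℤ) (A : CochainComplex (ModuleCat.{u} R) ℤ) :
    Module.Finite R (hH n A) ↔ Module.Finite R (A.homology n) :=
  Module.Finite.equiv_iff (hIso n A).toLinearEquiv

lemma homologyMap_smul_id (n : ℤ) (x : R) (A : CochainComplex (ModuleCat.{u} R) ℤ) :
    HomologicalComplex.homologyMap (x • 𝟙 A) n = x • 𝟙 (A.homology n) := by
  have h : (HomologicalComplex.shortComplexFunctor (ModuleCat.{u} R) (ComplexShape.up ℤ) n).map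
      (x • 𝟙 A) = x • 𝟙 (A.sc n) := by
    apply ShortComplex.hom_ext
    · rfl
    · rfl
    · rfl
  have h2 : ShortComplex.homologyMap (x • 𝟙 (A.sc n)) = x • 𝟙 (A.sc n).homology := by
    rw [ShortComplex.homologyMap_smul, ShortComplex.homologyMap_id]
  unfold HomologicalComplex.homologyMap
  rw [h]
  exact h2

lemma hMap_smul_id (n : ℤ) (x : R) (A : CochainComplex (ModuleCat.{u} R) ℤ) :
    hMap n (x • 𝟙 A) = x • 𝟙 _ := by
  rw [← cancel_mono (hIso n A).hom, hMap_hIso, homologyMap_smul_id, Linear.comp_smul,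
    Linear.smul_comp, Category.comp_id, Category.id_comp]

/-- inr on homology -/
noncomputable def lesA (n : ℤ) (x : R) (A : CochainComplex (ModuleCat.{u} R) ℤ) :
    hH n A →ₗ[R] hH n (mappingCone (x • 𝟙 A)) :=
  (hMap n (mappingCone.inr (x • 𝟙 A))).hom

/-- connecting map on homology -/
noncomputable def lesB (n : ℤ) (x : R) (A : CochainComplex (ModuleCat.{u} R) ℤ) :
    hH n (mappingCone (x • 𝟙 A)) →ₗ[R] hH (n + 1) A :=
  ((HomotopyCategory.homologyFunctor (ModuleCat.{u} R) (ComplexShape.up ℤ) 0).homologySequenceδ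
    (mappingCone.triangleh (x • 𝟙 A)) n (n + 1) rfl).hom

lemma les₂ (n : ℤ) (x : R) (A : CochainComplex (ModuleCat.{u} R) ℤ) :
    Function.Exact (fun m : hH n A => x • m) (lesA n x A) := by
  have := (HomotopyCategory.homologyFunctor (ModuleCat.{u} R)
    (ComplexShape.up ℤ) 0).homologySequence_exact₂ (mappingCone.triangleh (x • 𝟙 A))
    (HomotopyCategory.mappingCone_triangleh_distinguished _) n
  rw [ShortComplex.ShortExact.moduleCat_exact_iff_function_exact] at this
  have h : Function.Exact (hMap n (x • 𝟙 A)) (lesA n x A) := this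
  rw [hMap_smul_id] at h
  exact h

lemma les₃ (n : ℤ) (x : R) (A : CochainComplex (ModuleCat.{u} R) ℤ) :
    Function.Exact (lesA n x A) (lesB n x A) := by
  have := (HomotopyCategory.homologyFunctor (ModuleCat.{u} R)
    (ComplexShape.up ℤ) 0).homologySequence_exact₃ (mappingCone.triangleh (x • 𝟙 A))
    (HomotopyCategory.mappingCone_triangleh_distinguished _) n (n + 1) rfl
  rw [ShortComplex.ShortExact.moduleCat_exact_iff_function_exact] at this
  exact this

lemma les₁ (n : ℤ) (x : R) (A : CochainComplex (ModuleCat.{u} R) ℤ) :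
    Function.Exact (lesB n x A) (fun m : hH (n + 1) A => x • m) := by
  have := (HomotopyCategory.homologyFunctor (ModuleCat.{u} R)
    (ComplexShape.up ℤ) 0).homologySequence_exact₁ (mappingCone.triangleh (x • 𝟙 A))
    (HomotopyCategory.mappingCone_triangleh_distinguished _) n (n + 1) rfl
  rw [ShortComplex.ShortExact.moduleCat_exact_iff_function_exact] at this
  have h : Function.Exact (lesB n x A) (hMap (n + 1) (x • 𝟙 A)) := this
  rw [hMap_smul_id] at h
  exact h

lemma smul_comm' (x : R) {A B : CochainComplex (ModuleCat.{u} R) ℤ} (g : A ⟶ B) :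
    (x • 𝟙 A) ≫ g = g ≫ (x • 𝟙 B) := by simp

/-- induced map on cones -/
noncomputable abbrev coneMap (x : R) {A B : CochainComplex (ModuleCat.{u} R) ℤ} (g : A ⟶ B) :=
  mappingCone.map _ _ g g (smul_comm' x g)

lemma lesA_nat (n : ℤ) (x : R) {A B : CochainComplex (ModuleCat.{u} R) ℤ} (g : A ⟶ B)
    (m : hH n A) : hMap n (coneMap x g) (lesA n x A m) = lesA n x B (hMap n g m) := by
  have : hMap n (mappingCone.inr (x • 𝟙 A)) ≫ hMap n (coneMap x g) =
      hMap n g ≫ hMap n (mappingCone.inr (x • 𝟙 B)) := by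
    dsimp only [hMap]
    rw [← Functor.map_comp, ← Functor.map_comp, ← Functor.map_comp, ← Functor.map_comp]
    simp [mappingCone.map]
  exact ConcreteCategory.congr_hom this m

lemma lesB_nat (n : ℤ) (x : R) {A B : CochainComplex (ModuleCat.{u} R) ℤ} (g : A ⟶ B)
    (p : hH n (mappingCone (x • 𝟙 A))) :
    hMap (n + 1) g (lesB n x A p) = lesB n x B (hMap n (coneMap x g) p) := by
  have := (HomotopyCategory.homologyFunctor (ModuleCat.{u} R)
    (ComplexShape.up ℤ) 0).homologySequenceδ_naturality _ _
      ((HomotopyCategory.quotient _ _).mapTriangle.map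
        (mappingCone.triangleMap _ _ g g (smul_comm' x g))) n (n + 1) rfl
  exact (ConcreteCategory.congr_hom this p).symm

lemma cone_bij_of (x : R) {A B : CochainComplex (ModuleCat.{u} R) ℤ} (g : A ⟶ B)
    (h : ∀ n, Function.Bijective (hMap n g)) (n : ℤ) :
    Function.Bijective (hMap n (coneMap x g)) := by
  constructor
  · intro p p' hpp
    rw [← sub_eq_zero] at hpp ⊢
    rw [← map_sub] at hpp
    set q := p - p'
    have h1 : lesB n x A q = 0 := (h (n + 1)).1 (by rw [lesB_nat, hpp, map_zero, map_zero])
    obtain ⟨m, hm⟩ := (les₃ n x A q).1 h1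
    have h2 : lesA n x B (hMap n g m) = 0 := by rw [← lesA_nat, hm, hpp]
    obtain ⟨k, hk⟩ := (les₂ n x B _).1 h2
    obtain ⟨l, rfl⟩ := (h n).2 k
    have h3 : x • l = m := (h n).1 (by rw [map_smul]; exact hk)
    rw [← hm]
    exact (les₂ n x A _).2 ⟨l, h3⟩
  · intro q
    obtain ⟨m, hm⟩ := (h (n + 1)).2 (lesB n x B q)
    have h1 : x • m = 0 := (h (n + 1)).1 (by
      rw [map_smul, hm, map_zero]
      exact (les₁ n x B _).2 ⟨q, rfl⟩)
    obtain ⟨p, rfl⟩ := (les₁ n x A _).1 h1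
    obtain ⟨k, hk⟩ := (les₃ n x B (q - hMap n (coneMap x g) p)).1 (by
      rw [map_sub, ← lesB_nat, hm, sub_self])
    obtain ⟨l, rfl⟩ := (h n).2 k
    refine ⟨lesA n x A l + p, ?_⟩
    rw [map_add, lesA_nat, hk, sub_add_cancel]

lemma bij_of_cone [IsNoetherianRing R] (x : R) (hx : x ∈ Ideal.jacobson (⊥ : Ideal R))
    {A B : CochainComplex (ModuleCat.{u} R) ℤ} (g : A ⟶ B)
    (hA : ∀ n, Module.Finite R (hH n A)) (hB : ∀ n, Module.Finite R (hH n B))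
    (h : ∀ n, Function.Bijective (hMap n (coneMap x g))) (n : ℤ) :
    Function.Bijective (hMap n g) := by
  have inj : ∀ n, Function.Injective (hMap (n + 1) g) := fun n =>
    nak_inj x hx (lesB n x A) (lesA (n + 1) x A) (lesB n x B) (lesA (n + 1) x B)
      (hMap (n + 1) g).hom (hMap n (coneMap x g)).hom (hMap (n + 1) (coneMap x g)).hom
      (fun p => (les₁ n x A _).2 ⟨p, rfl⟩) (fun m hm => (les₂ (n + 1) x A m).1 hm)
      (fun k hk => (les₁ n x B k).1 hk) (lesB_nat n x g) (lesA_nat (n + 1) x g)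
      (h n).2 (h (n + 1)).1
  constructor
  · obtain ⟨m, rfl⟩ : ∃ m, n = m + 1 := ⟨n - 1, by lia⟩
    exact inj m
  · exact nak_surj x hx (lesA n x A) (lesB n x A) (lesA n x B) (lesB n x B)
      (hMap n g).hom (hMap n (coneMap x g)).hom (hMap (n + 1) g).hom
      (fun p hp => (les₃ n x A p).1 hp) (fun k => (les₃ n x B _).2 ⟨k, rfl⟩)
      (fun k hk => (les₂ n x B k).1 hk) (lesA_nat n x g) (lesB_nat n x g) (h n).2 (inj n)

lemma finite_cone [IsNoetherianRing R] (x : R) {A : CochainComplex (ModuleCat.{u} R) ℤ}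
    (hA : ∀ n, Module.Finite R (hH n A)) (n : ℤ) :
    Module.Finite R (hH n (mappingCone (x • 𝟙 A))) := by
  have : IsNoetherian R (hH n (mappingCone (x • 𝟙 A))) :=
    isNoetherian_of_range_eq_ker (lesA n x A) (lesB n x A)
      (LinearMap.exact_iff.1 (les₃ n x A)).symm
  infer_instance

end

section
variable {R : Type u} [CommRing R] [IsNoetherianRing R]

/-- `K(x :: xs) ⊗ X` is the cone of `x` on `K(xs) ⊗ X`. -/
lemma exists_iso_cons (x : R) (K : CochainComplex (ModuleCat.{u} R) ℤ)
    {X Y : CochainComplex (ModuleCat.{u} R) ℤ} (f : X ⟶ Y) :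
    ∃ (e₁ : mappingCone (x • 𝟙 (HomologicalComplex.tensorObj K X)) ≅
        HomologicalComplex.tensorObj (mappingCone (x • 𝟙 K)) X)
      (e₂ : mappingCone (x • 𝟙 (HomologicalComplex.tensorObj K Y)) ≅
        HomologicalComplex.tensorObj (mappingCone (x • 𝟙 K)) Y),
      e₁.hom ≫ HomologicalComplex.tensorHom (𝟙 (mappingCone (x • 𝟙 K))) f =
        coneMap x (HomologicalComplex.tensorHom (𝟙 K) f) ≫ e₂.hom := by
  have key : ∀ (a : HomologicalComplex.tensorObj K X ⟶ HomologicalComplex.tensorObj K X)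
      (b : HomologicalComplex.tensorObj K Y ⟶ HomologicalComplex.tensorObj K Y)
      (ha : a = HomologicalComplex.tensorHom (x • 𝟙 K) (𝟙 X))
      (hb : b = HomologicalComplex.tensorHom (x • 𝟙 K) (𝟙 Y))
      (hc : a ≫ HomologicalComplex.tensorHom (𝟙 K) f = HomologicalComplex.tensorHom (𝟙 K) f ≫ b),
      ∃ (e₁ : mappingCone a ≅ HomologicalComplex.tensorObj (mappingCone (x • 𝟙 K)) X)
        (e₂ : mappingCone b ≅ HomologicalComplex.tensorObj (mappingCone (x • 𝟙 K)) Y),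
      e₁.hom ≫ HomologicalComplex.tensorHom (𝟙 (mappingCone (x • 𝟙 K))) f =
        mappingCone.map _ _ (HomologicalComplex.tensorHom (𝟙 K) f)
          (HomologicalComplex.tensorHom (𝟙 K) f) hc ≫ e₂.hom := by
    rintro a b rfl rfl hc
    exact ⟨coneTensorIso _ _, coneTensorIso _ _, coneTensorHom_naturality _ _⟩
  exact key _ _ (tensorHom_smul_id _ _ _).symm (tensorHom_smul_id _ _ _).symm _

lemma quasiIso_iff_of_iso {A B A' B' : CochainComplex (ModuleCat.{u} R) ℤ} (e₁ : A ≅ A')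
    (e₂ : B ≅ B') (f : A ⟶ B) (f' : A' ⟶ B') (h : e₁.hom ≫ f' = f ≫ e₂.hom) :
    QuasiIso f ↔ QuasiIso f' := by
  rw [← quasiIso_iff_comp_left e₁.hom f', h, quasiIso_iff_comp_right]

lemma finite_of_iso {A B : CochainComplex (ModuleCat.{u} R) ℤ} (e : A ≅ B)
    (h : ∀ n, Module.Finite R (hH n A)) (n : ℤ) : Module.Finite R (hH n B) :=
  have := h n
  Module.Finite.equiv ((HomotopyCategory.homologyFunctor (ModuleCat.{u} R)
    (ComplexShape.up ℤ) n).mapIso ((HomotopyCategory.quotient _ _).mapIso e)).toLinearEquiv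

/-- the base case iso -/
noncomputable def nilIso (X : CochainComplex (ModuleCat.{u} R) ℤ) :
    X ≅ HomologicalComplex.tensorObj (koszulComplex R []) X :=
  (HomologicalComplex.leftUnitor X).symm

lemma leftUnitor_inv_naturality {X Y : CochainComplex (ModuleCat.{u} R) ℤ} (f : X ⟶ Y) :
    (HomologicalComplex.leftUnitor X).inv ≫ HomologicalComplex.tensorHom
      (𝟙 (HomologicalComplex.tensorUnit (ModuleCat.{u} R) (ComplexShape.up ℤ))) f =
      f ≫ (HomologicalComplex.leftUnitor Y).inv := by
  ext p : 1
  have h : ∀ Z : CochainComplex (ModuleCat.{u} R) ℤ,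
    (HomologicalComplex.leftUnitor Z).inv.f p =
    (λ_ (Z.X p)).inv ≫ ((singleObjXSelf (ComplexShape.up ℤ) 0 (𝟙_ _)).inv ▷ (Z.X p)) ≫
      ιTensorObj (HomologicalComplex.tensorUnit (ModuleCat.{u} R) (ComplexShape.up ℤ))
        Z 0 p p (zero_add p) := fun Z => leftUnitor'_inv Z p
  rw [HomologicalComplex.comp_f, HomologicalComplex.comp_f, h, h]
  simp only [Category.assoc, ι_tensorHom']
  rw [HomologicalComplex.id_f, MonoidalCategory.id_whiskerRight, Category.id_comp]
  erw [← MonoidalCategory.whisker_exchange_assoc]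
  rw [MonoidalCategory.id_whiskerLeft]
  simp only [Category.assoc, Iso.inv_hom_id_assoc]

lemma nilIso_naturality {X Y : CochainComplex (ModuleCat.{u} R) ℤ} (f : X ⟶ Y) :
    (nilIso X).hom ≫ HomologicalComplex.tensorHom (𝟙 (koszulComplex R [])) f =
      f ≫ (nilIso Y).hom :=
  leftUnitor_inv_naturality f

lemma finite_koszul {X : CochainComplex (ModuleCat.{u} R) ℤ}
    (hX : ∀ n, Module.Finite R (hH n X)) (xs : List R) :
    ∀ n, Module.Finite R (hH n (HomologicalComplex.tensorObj (koszulComplex R xs) X)) := by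
  induction xs with
  | nil => exact finite_of_iso (nilIso X) hX
  | cons x xs ih =>
    obtain ⟨e₁, -⟩ := exists_iso_cons x (koszulComplex R xs) (𝟙 X)
    exact finite_of_iso e₁ (finite_cone x ih)

end

/-- Let `R` be a commutative Noetherian ring and `f : X ⟶ Y` a morphism of complexes of
`R`-modules whose homology modules are all finitely generated.  Let `x₁, …, xₙ` be a sequence
of elements of the Jacobson radical of `R` and `K = K^R(x₁, …, xₙ)` the corresponding Koszul
complex.  Then `f` is a quasi-isomorphism iff `K ⊗_R f` is a quasi-isomorphism. -/
theorem quasiIso_iff_quasiIso_koszul_tensor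
    (R : Type u) [CommRing R] [IsNoetherianRing R]
    (X Y : CochainComplex (ModuleCat.{u} R) ℤ) (f : X ⟶ Y)
    (hX : ∀ i : ℤ, Module.Finite R (X.homology i))
    (hY : ∀ i : ℤ, Module.Finite R (Y.homology i))
    (xs : List R) (hxs : ∀ x ∈ xs, x ∈ Ideal.jacobson (⊥ : Ideal R)) :
    QuasiIso f ↔
      QuasiIso (HomologicalComplex.tensorHom (𝟙 (koszulComplex R xs)) f :
        HomologicalComplex.tensorObj (koszulComplex R xs) X ⟶
          HomologicalComplex.tensorObj (koszulComplex R xs) Y) := by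
  have hX' : ∀ n, Module.Finite R (hH n X) := fun n => (finite_hH_iff n X).2 (hX n)
  have hY' : ∀ n, Module.Finite R (hH n Y) := fun n => (finite_hH_iff n Y).2 (hY n)
  induction xs with
  | nil => exact quasiIso_iff_of_iso (nilIso X) (nilIso Y) _ _ (nilIso_naturality f)
  | cons x xs ih =>
    refine (ih (fun y hy => hxs y (List.mem_cons_of_mem _ hy))).trans ?_
    obtain ⟨e₁, e₂, h⟩ := exists_iso_cons x (koszulComplex R xs) f
    refine Iff.trans ?_ (quasiIso_iff_of_iso e₁ e₂ _ _ h)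
    rw [quasiIso_iff_hMap, quasiIso_iff_hMap]
    exact ⟨fun h n => cone_bij_of x _ h n, fun h n => bij_of_cone x
      (hxs x List.mem_cons_self) _ (finite_koszul hX' xs) (finite_koszul hY' xs) h n⟩
end

section
/- Let φ : (R,m) → (S,n) be a flat local homomorphism of commutative Noetherian local rings such that the induced map R/m → S/mS is an isomorphism, and let M and N be finitely generated R-modules. If for every prime ideal p ∈ Supp_R(M) ∩ Supp_R(N) the induced ring map R/p → S/pS is an isomorphism, then for every i ≥ 0 the R-module Tor_i^R(M,N) has an S-module structure compatible with its R-module structure via φ. -/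
universe u

open CategoryTheory TensorProduct

/-- An `R`-module `L` has an `S`-module structure compatible with its `R`-module structure
via `algebraMap R S` if there is an `S`-scalar multiplication making `L` an `S`-module
such that `algebraMap R S r • x = r • x` for all `r : R`, `x : L`. -/
def HasCompatibleSModule (R S L : Type*) [CommRing R] [CommRing S] [Algebra R S]
    [AddCommGroup L] [Module R L] : Prop :=
  ∃ inst : Module S L, ∀ (r : R) (x : L), (letI := inst; (algebraMap R S r) • x) = r • x

/-- `Tor_i^R(M, N)` as an object of `ModuleCat R`. -/
noncomputable def torModule (R : Type u) [CommRing R] (M N : Type u) [AddCommGroup M]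
    [Module R M] [AddCommGroup N] [Module R N] (i : ℕ) : ModuleCat.{u} R :=
  ((Tor (ModuleCat.{u} R) i).obj (ModuleCat.of R M)).obj (ModuleCat.of R N)


theorem aux_homologyMap_smul {R : Type u} [CommRing R]
    {K L : ChainComplex (ModuleCat.{u} R) ℕ} (f : K ⟶ L) (r : R) (n : ℕ) :
    HomologicalComplex.homologyMap (r • f) n = r • HomologicalComplex.homologyMap f n :=
  ShortComplex.homologyMap_smul
    (φ := (HomologicalComplex.shortComplexFunctor _ _ n).map f) (a := r)

theorem aux_tor_right {R : Type u} [CommRing R] (F : ModuleCat.{u} R ⥤ ModuleCat.{u} R)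
    [F.Additive] [F.Linear R] (X : ModuleCat.{u} R) (r : R) (hr : r • 𝟙 X = 0) (n : ℕ) :
    r • 𝟙 ((F.leftDerived n).obj X) = 0 := by
  have e := Functor.leftDerived_map_eq F n (r • 𝟙 X)
    (P := projectiveResolution X) (Q := projectiveResolution X) (r • 𝟙 _) (by
      ext : 1
      simp only [HomologicalComplex.comp_f, HomologicalComplex.smul_f_apply,
        HomologicalComplex.id_f, Linear.smul_comp, Category.id_comp,
        ChainComplex.single₀_map_f_zero]
      exact ((Linear.comp_smul _ _ _ _ _ _).trans
        (congrArg (r • ·) (Category.comp_id _))).symm)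
  have e0 := Functor.leftDerived_map_eq F n (r • 𝟙 X)
    (P := projectiveResolution X) (Q := projectiveResolution X) 0 (by
      rw [hr, Functor.map_zero, Limits.zero_comp, Limits.comp_zero])
  rw [Functor.map_zero, Limits.zero_comp, Limits.comp_zero] at e0
  rw [e0] at e
  have e2 : (F.mapHomologicalComplex (ComplexShape.down ℕ) ⋙
      HomologicalComplex.homologyFunctor _ _ n).map
        (r • 𝟙 (projectiveResolution X).complex) = r • 𝟙 _ := by
    have e3 : (F.mapHomologicalComplex (ComplexShape.down ℕ)).map
        (r • 𝟙 (projectiveResolution X).complex) = r • 𝟙 _ := by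
      ext i : 1
      simp
    rw [Functor.comp_map, e3]
    exact (aux_homologyMap_smul _ r n).trans (by
      rw [HomologicalComplex.homologyMap_id]; rfl)
  rw [e2] at e
  rw [e]
  simp

theorem aux_tor_left {R : Type u} [CommRing R] (F : ModuleCat.{u} R ⥤ ModuleCat.{u} R)
    [F.Additive] (r : R) (hr : ∀ Y, r • 𝟙 (F.obj Y) = 0) (X : ModuleCat.{u} R) (n : ℕ) :
    r • 𝟙 ((F.leftDerived n).obj X) = 0 := by
  let K := (F.mapHomologicalComplex (ComplexShape.down ℕ)).obj (projectiveResolution X).complex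
  let i : (F.leftDerived n).obj X ≅ K.homology n :=
    (projectiveResolution X).isoLeftDerivedObj F n
  have h1 : r • 𝟙 K = 0 := by
    ext j : 1
    exact hr _
  have h2 : r • 𝟙 (K.homology n) = 0 := by
    have := aux_homologyMap_smul (𝟙 K) r n
    rw [h1, HomologicalComplex.homologyMap_zero, HomologicalComplex.homologyMap_id] at this
    exact this.symm
  have h3 : r • 𝟙 ((F.leftDerived n).obj X) = i.hom ≫ (r • 𝟙 (K.homology n)) ≫ i.inv := by
    rw [Linear.smul_comp, Linear.comp_smul, Category.id_comp, i.hom_inv_id]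
  rw [h3, h2, Limits.zero_comp, Limits.comp_zero]

theorem aux_kill {R : Type u} [CommRing R] (X : ModuleCat.{u} R) (r : R) :
    r • 𝟙 X = 0 ↔ ∀ x : X, r • x = 0 := by
  constructor
  · intro h x
    have := congrArg (fun f => f.hom x) h
    exact this
  · intro h
    ext x
    exact h x

theorem aux_tor_kill (R : Type u) [CommRing R] (M N : Type u) [AddCommGroup M]
    [Module R M] [AddCommGroup N] [Module R N] (i : ℕ) (r : R)
    (hr : r ∈ Module.annihilator R M ⊔ Module.annihilator R N) (x : torModule R M N i) :
    r • x = 0 := by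
  obtain ⟨a, ha, b, hb, rfl⟩ := Submodule.mem_sup.mp hr
  rw [Module.mem_annihilator] at ha hb
  rw [add_smul]
  have h1 : a • x = 0 := by
    revert x
    rw [← aux_kill]
    refine aux_tor_left ((MonoidalCategory.tensoringLeft (ModuleCat.{u} R)).obj
      (ModuleCat.of R M)) a ?_ _ i
    intro Y
    rw [aux_kill]
    intro x
    change M ⊗[R] Y at x
    change a • x = 0
    induction x with
    | zero => simp
    | tmul m y => rw [TensorProduct.smul_tmul', ha, TensorProduct.zero_tmul]
    | add x y hx hy => rw [smul_add, hx, hy, add_zero]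
  have h2 : b • x = 0 := by
    clear h1
    revert x
    rw [← aux_kill]
    have : ((MonoidalCategory.tensoringLeft (ModuleCat.{u} R)).obj
      (ModuleCat.of R M)).Linear R :=
        inferInstanceAs ((MonoidalCategory.tensorLeft (ModuleCat.of R M)).Linear R)
    refine aux_tor_right ((MonoidalCategory.tensoringLeft (ModuleCat.{u} R)).obj
      (ModuleCat.of R M)) (ModuleCat.of R N) b ?_ i
    rw [aux_kill]
    exact hb
  rw [h1, h2, add_zero]

theorem aux_surj (R S : Type u) [CommRing R] [CommRing S] [IsNoetherianRing R] [Algebra R S]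
    (I : Ideal R)
    (h : ∀ p : Ideal R, p.IsPrime → I ≤ p →
      ∀ s : S, ∃ r : R, s - algebraMap R S r ∈ p.map (algebraMap R S)) :
    ∀ s : S, ∃ r : R, s - algebraMap R S r ∈ I.map (algebraMap R S) := by
  let P : Ideal R → Prop := fun J =>
    ∀ s : S, ∃ r : R, s - algebraMap R S r ∈ J.map (algebraMap R S)
  have hone : P 1 := fun s => ⟨0, by simp [Ideal.one_eq_top, Ideal.map_top]⟩
  have hmul : ∀ J K, P J → P K → P (J * K) := by
    intro J K hJ hK
    have key : ∀ t ∈ J.map (algebraMap R S),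
        ∃ r ∈ J, t - algebraMap R S r ∈ (J * K).map (algebraMap R S) := by
      intro t ht
      rw [Ideal.map] at ht
      induction ht using Submodule.span_induction with
      | mem x hx =>
        obtain ⟨a, ha, rfl⟩ := hx
        exact ⟨a, ha, by simp⟩
      | zero => exact ⟨0, J.zero_mem, by simp⟩
      | add x y _ _ hx hy =>
        obtain ⟨a, ha, ha'⟩ := hx
        obtain ⟨b, hb, hb'⟩ := hy
        refine ⟨a + b, J.add_mem ha hb, ?_⟩
        have := Ideal.add_mem _ ha' hb'
        rw [map_add]
        convert this using 1
        ring
      | smul c x _ hx =>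
        obtain ⟨a, ha, ha'⟩ := hx
        obtain ⟨d, hd⟩ := hK c
        refine ⟨d * a, J.mul_mem_left _ ha, ?_⟩
        have h1 := Ideal.mul_mem_left _ c ha'
        have h2 : algebraMap R S a * (c - algebraMap R S d) ∈
            (J * K).map (algebraMap R S) := by
          rw [Ideal.map_mul]
          exact Ideal.mul_mem_mul (Ideal.mem_map_of_mem _ ha) hd
        have := Ideal.add_mem _ h1 h2
        rw [map_mul, smul_eq_mul]
        convert this using 1
        ring
    intro s
    obtain ⟨r, hr⟩ := hJ s
    obtain ⟨q, _, hq⟩ := key _ hr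
    refine ⟨r + q, ?_⟩
    rw [map_add, ← sub_sub]
    exact hq
  have hmono : ∀ J K, J ≤ K → P J → P K := fun J K hle hJ s =>
    let ⟨r, hr⟩ := hJ s
    ⟨r, Ideal.map_mono hle hr⟩
  have hfin := I.finite_minimalPrimes_of_isNoetherianRing R
  have hprod : P (∏ p ∈ hfin.toFinset, p) := by
    refine Finset.prod_induction _ P hmul hone ?_
    intro p hp
    rw [Set.Finite.mem_toFinset] at hp
    exact h p hp.1.1 hp.1.2
  have hrad : P I.radical := by
    refine hmono _ _ ?_ hprod
    rw [← Ideal.sInf_minimalPrimes]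
    refine le_sInf fun p hp => ?_
    exact (Ideal.prod_le_inf (f := fun p => p)).trans
      (Finset.inf_le (f := fun p => p) (hfin.mem_toFinset.mpr hp))
  obtain ⟨n, hn⟩ := Ideal.exists_radical_pow_le_of_fg I (IsNoetherian.noetherian _)
  refine hmono _ _ hn ?_
  clear hn
  induction n with
  | zero => simpa using hone
  | succ n ih => rw [pow_succ]; exact hmul _ _ ih hrad

/-- Let `φ : (R, m) → (S, n)` be a flat local homomorphism of commutative Noetherian local
rings such that `R/m → S/mS` is an isomorphism, and let `M`, `N` be finitely generated
`R`-modules. If `R/p → S/pS` is an isomorphism for every `p ∈ Supp_R M ∩ Supp_R N`, then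
`Tor_i^R(M, N)` has a compatible `S`-module structure for all `i ≥ 0`. -/
theorem tor_hasCompatibleSModule
    (R S : Type u) [CommRing R] [CommRing S] [IsLocalRing R] [IsLocalRing S]
    [IsNoetherianRing R] [IsNoetherianRing S] [Algebra R S] [Module.Flat R S]
    [IsLocalHom (algebraMap R S)]
    (hres : Function.Bijective
      (Ideal.quotientMap ((IsLocalRing.maximalIdeal R).map (algebraMap R S)) (algebraMap R S)
        Ideal.le_comap_map))
    (M N : Type u) [AddCommGroup M] [Module R M] [Module.Finite R M]
    [AddCommGroup N] [Module R N] [Module.Finite R N]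
    (h : ∀ p : PrimeSpectrum R, p ∈ Module.support R M ∩ Module.support R N →
      Function.Bijective
        (Ideal.quotientMap (p.asIdeal.map (algebraMap R S)) (algebraMap R S)
          Ideal.le_comap_map)) :
    ∀ i : ℕ, HasCompatibleSModule R S (torModule R M N i) := by
  intro i
  let I := Module.annihilator R M ⊔ Module.annihilator R N
  have hs : ∀ s : S, ∃ r : R, s - algebraMap R S r ∈ I.map (algebraMap R S) := by
    refine aux_surj R S I ?_
    intro p hp hIp s
    have hb := h ⟨p, hp⟩ (by
      rw [Module.support_eq_zeroLocus, Module.support_eq_zeroLocus]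
      exact ⟨le_sup_left.trans hIp, le_sup_right.trans hIp⟩)
    obtain ⟨q, hq⟩ := hb.2 (Ideal.Quotient.mk _ s)
    obtain ⟨r, rfl⟩ := Ideal.Quotient.mk_surjective q
    refine ⟨r, ?_⟩
    rw [Ideal.quotientMap_mk] at hq
    exact Ideal.Quotient.eq.mp hq.symm
  have hff : Module.FaithfullyFlat R S := Module.FaithfullyFlat.of_flat_of_isLocalHom
  let f : R →+* S ⧸ I.map (algebraMap R S) := (Ideal.Quotient.mk _).comp (algebraMap R S)
  have hf : Function.Surjective f := by
    intro y
    obtain ⟨s, rfl⟩ := Ideal.Quotient.mk_surjective y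
    obtain ⟨r, hr⟩ := hs s
    exact ⟨r, (Ideal.Quotient.eq.mpr hr).symm⟩
  have hker : ∀ r, r ∈ RingHom.ker f →
      Module.toAddMonoidEnd R (torModule R M N i) r = 0 := by
    intro r hr
    have : r ∈ I := by
      rw [← Ideal.comap_map_eq_self_of_faithfullyFlat (B := S) I]
      exact (Ideal.Quotient.eq_zero_iff_mem (I := I.map (algebraMap R S))).mp hr
    ext x
    exact aux_tor_kill R M N i r this x
  let g : S ⧸ I.map (algebraMap R S) →+* AddMonoid.End (torModule R M N i) :=
    RingHom.liftOfSurjective f hf ⟨Module.toAddMonoidEnd R (torModule R M N i), hker⟩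
  have hg : ∀ r, g (f r) = Module.toAddMonoidEnd R (torModule R M N i) r := fun r =>
    RingHom.liftOfRightInverse_comp_apply _ _ _ ⟨_, hker⟩ r
  refine ⟨Module.compHom _ (g.comp (Ideal.Quotient.mk _)), ?_⟩
  intro r x
  exact DFunLike.congr_fun (hg r) x
end

section
/- Let φ : (R,m) → (S,n) be a flat local homomorphism of commutative Noetherian local rings such that the induced map R/m → S/mS is an isomorphism, and let M and N be finitely generated R-modules. If for every prime ideal p ∈ Supp_R(M) ∩ Supp_R(N) the induced ring map R/p → S/pS is an isomorphism, then for every i ≥ 0 the R-module Ext^i_R(M,N) has an S-module structure compatible with its R-module structure via φ. -/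
universe u

open CategoryTheory TensorProduct

/-- `Ext^i_R(M, N)` as an object of `ModuleCat R`. -/
noncomputable def extModule (R : Type u) [CommRing R] (M N : Type u) [AddCommGroup M]
    [Module R M] [AddCommGroup N] [Module R N] (i : ℕ) : ModuleCat.{u} R :=
  ((Ext R (ModuleCat.{u} R) i).obj (Opposite.op (ModuleCat.of R M))).obj (ModuleCat.of R N)


lemma smul_homology_eq_zero {R : Type u} [CommRing R] (K : CochainComplex (ModuleCat.{u} R) ℕ)
    (r : R) (h : Homotopy (r • 𝟙 K) 0) (n : ℕ) (x : K.homology n) : r • x = 0 := by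
  have h1 := h.homologyMap_eq n
  have h2 : HomologicalComplex.homologyMap (r • 𝟙 K) n
      = r • HomologicalComplex.homologyMap (𝟙 K) n :=
    ShortComplex.homologyMap_smul ((HomologicalComplex.shortComplexFunctor _ _ n).map (𝟙 K)) r
  rw [h2, HomologicalComplex.homologyMap_id, HomologicalComplex.homologyMap_zero] at h1
  exact ConcreteCategory.congr_hom h1 x

lemma smul_ext_eq_zero_right (R : Type u) [CommRing R] (M N : ModuleCat.{u} R) (r : R)
    (hr : ∀ x : N, r • x = 0) (i : ℕ)
    (x : ((Ext R (ModuleCat.{u} R) i).obj (Opposite.op M)).obj N) : r • x = 0 := by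
  let P := projectiveResolution M
  let e := (P.isoExt (R := R) i N).toLinearEquiv
  apply e.injective
  rw [map_smul, map_zero]
  apply smul_homology_eq_zero
  apply Homotopy.ofEq
  ext j (f : P.complex.X j ⟶ N)
  change r • f = 0
  ext y
  exact hr (f y)

lemma smul_ext_eq_zero_left (R : Type u) [CommRing R] (M N : ModuleCat.{u} R) (r : R)
    (hr : ∀ x : M, r • x = 0) (i : ℕ)
    (x : ((Ext R (ModuleCat.{u} R) i).obj (Opposite.op M)).obj N) : r • x = 0 := by
  let P := projectiveResolution M
  let e := (P.isoExt (R := R) i N).toLinearEquiv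
  apply e.injective
  rw [map_smul, map_zero]
  apply smul_homology_eq_zero
  have h : Homotopy (r • 𝟙 P.complex) 0 := ProjectiveResolution.liftHomotopyZero _ (by
    have : r • 𝟙 M = 0 := by
      ext y
      exact hr y
    rw [Linear.smul_comp, Category.id_comp]
    apply HomologicalComplex.to_single_hom_ext
    ext y
    exact hr _)
  have h2 := (Functor.mapHomotopy ((linearYoneda R (ModuleCat.{u} R)).obj N).rightOp h).unop
  refine (Homotopy.ofEq ?_).trans (h2.trans (Homotopy.ofEq ?_))
  · ext j (f : P.complex.X j ⟶ N)
    change r • f = (r • 𝟙 _) ≫ f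
    simp
  · ext j (f : P.complex.X j ⟶ N)
    change (0 : P.complex.X j ⟶ P.complex.X j) ≫ f = 0
    simp

lemma quotientMap_bijective_iff (R S : Type u) [CommRing R] [CommRing S] [Algebra R S] (I : Ideal R) :
    Function.Bijective (Ideal.quotientMap (I.map (algebraMap R S)) (algebraMap R S)
        Ideal.le_comap_map) ↔ Function.Bijective (TensorProduct.mk R S (R ⧸ I) 1) := by
  let e := Algebra.TensorProduct.quotIdealMapEquivTensorQuot S I
  rw [← Function.Bijective.of_comp_iff' e.bijective]
  have : ⇑e ∘ ⇑(Ideal.quotientMap (I.map (algebraMap R S)) (algebraMap R S) Ideal.le_comap_map)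
      = TensorProduct.mk R S (R ⧸ I) 1 := by
    ext x
    obtain ⟨x, rfl⟩ := Ideal.Quotient.mk_surjective x
    change (algebraMap R S x) ⊗ₜ[R] (1 : R ⧸ I) = 1 ⊗ₜ[R] (Ideal.Quotient.mk I x)
    rw [Algebra.algebraMap_eq_smul_one, TensorProduct.smul_tmul, Algebra.smul_def, mul_one]
    rfl
  rw [this]

lemma mk_bijective_of_support (R S : Type u) [CommRing R] [CommRing S] [IsNoetherianRing R]
    [Algebra R S] [Module.Flat R S] (L : Type u) [AddCommGroup L] [Module R L] [hL : Module.Finite R L]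
    (h : ∀ p : PrimeSpectrum R, p ∈ Module.support R L →
      Function.Bijective
        (Ideal.quotientMap (p.asIdeal.map (algebraMap R S)) (algebraMap R S)
          Ideal.le_comap_map)) : Function.Bijective (TensorProduct.mk R S L 1) := by
  revert h
  induction hL using IsNoetherianRing.induction_on_isQuotientEquivQuotientPrime R with
  | subsingleton N => 
    intro _
    exact ⟨fun _ _ _ => Subsingleton.elim _ _, fun x => ⟨0, Subsingleton.elim _ _⟩⟩
  | quotient N p f =>
    intro h
    have hp := (quotientMap_bijective_iff R S p.asIdeal).1 (h p (by
      rw [f.support_eq, Module.support_eq_zeroLocus, Ideal.annihilator_quotient]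
      exact fun _ hx => hx))
    let e : S ⊗[R] N ≃ₗ[R] S ⊗[R] (R ⧸ p.asIdeal) := f.lTensor S
    rw [← Function.Bijective.of_comp_iff' e.bijective]
    have : ⇑e ∘ ⇑(TensorProduct.mk R S N 1) = TensorProduct.mk R S (R ⧸ p.asIdeal) 1 ∘ f := by
      ext x
      simp [e]
    rw [this]
    exact hp.comp f.bijective
  | exact N₁ N₂ N₃ f g hf hg hfg h₁ h₃ =>
    intro h
    have hs := Module.support_of_exact hfg hf hg
    have h₁ := h₁ fun p hp => h p (hs ▸ Or.inl hp)
    have h₃ := h₃ fun p hp => h p (hs ▸ Or.inr hp)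
    have hg' := LinearMap.lTensor_surjective S hg
    have hfg' := lTensor_exact S hfg hg
    have hf' := Module.Flat.lTensor_preserves_injective_linearMap (M := S) f hf
    have c1 (x) : f.lTensor S (TensorProduct.mk R S N₁ 1 x) = TensorProduct.mk R S N₂ 1 (f x) := by simp
    have c2 (x) : g.lTensor S (TensorProduct.mk R S N₂ 1 x) = TensorProduct.mk R S N₃ 1 (g x) := by simp
    constructor
    · rw [injective_iff_map_eq_zero]
      intro x hx
      have : g x = 0 := by
        apply h₃.1
        rw [← c2, hx, map_zero, map_zero]
      obtain ⟨y, rfl⟩ := (hfg x).1 this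
      rw [← c1] at hx
      have : y = 0 := h₁.1 (hf' (by rw [hx, map_zero, map_zero]))
      rw [this, map_zero]
    · intro y
      obtain ⟨z, hz⟩ := h₃.2 (g.lTensor S y)
      obtain ⟨x, rfl⟩ := hg z
      have : g.lTensor S (y - TensorProduct.mk R S N₂ 1 x) = 0 := by
        rw [map_sub, c2, hz, sub_self]
      obtain ⟨w, hw⟩ := (hfg' _).1 this
      obtain ⟨v, rfl⟩ := h₁.2 w
      refine ⟨x + f v, ?_⟩
      rw [map_add, ← c1, hw]
      abel

lemma compatible_of_annihilated (R S L : Type u) [CommRing R] [CommRing S] [Algebra R S]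
    [AddCommGroup L] [Module R L] (I : Ideal R)
    (hb : Function.Bijective (Ideal.quotientMap (I.map (algebraMap R S)) (algebraMap R S)
        Ideal.le_comap_map)) (hI : ∀ r ∈ I, ∀ x : L, r • x = 0) :
  ∃ inst : Module S L, ∀ (r : R) (x : L), (letI := inst; (algebraMap R S r) • x) = r • x := by
  have ht : Module.IsTorsionBySet R L I := fun x r => hI r.1 r.2 x
  let _ := ht.module
  let e := RingEquiv.ofBijective _ hb
  let φ : S →+* R ⧸ I := e.symm.toRingHom.comp (Ideal.Quotient.mk _)
  refine ⟨Module.compHom L φ, fun r x => ?_⟩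
  change φ (algebraMap R S r) • x = r • x
  have : φ (algebraMap R S r) = Ideal.Quotient.mk I r := by
    apply e.injective
    simp [φ, e]
  rw [this]
  exact ht.mk_smul r x

/-- Let `φ : (R, m) → (S, n)` be a flat local homomorphism of commutative Noetherian local
rings such that `R/m → S/mS` is an isomorphism, and let `M`, `N` be finitely generated
`R`-modules. If `R/p → S/pS` is an isomorphism for every `p ∈ Supp_R M ∩ Supp_R N`, then
`Ext^i_R(M, N)` has a compatible `S`-module structure for all `i ≥ 0`. -/
theorem ext_hasCompatibleSModule
    (R S : Type u) [CommRing R] [CommRing S] [IsLocalRing R] [IsLocalRing S]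
    [IsNoetherianRing R] [IsNoetherianRing S] [Algebra R S] [Module.Flat R S]
    [IsLocalHom (algebraMap R S)]
    (hres : Function.Bijective
      (Ideal.quotientMap ((IsLocalRing.maximalIdeal R).map (algebraMap R S)) (algebraMap R S)
        Ideal.le_comap_map))
    (M N : Type u) [AddCommGroup M] [Module R M] [Module.Finite R M]
    [AddCommGroup N] [Module R N] [Module.Finite R N]
    (h : ∀ p : PrimeSpectrum R, p ∈ Module.support R M ∩ Module.support R N →
      Function.Bijective
        (Ideal.quotientMap (p.asIdeal.map (algebraMap R S)) (algebraMap R S)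
          Ideal.le_comap_map)) :
    ∀ i : ℕ, HasCompatibleSModule R S (extModule R M N i) := by
  intro i
  let I := Module.annihilator R M ⊔ Module.annihilator R N
  apply compatible_of_annihilated R S _ I
  · rw [quotientMap_bijective_iff]
    apply mk_bijective_of_support
    intro p hp
    apply h p
    rw [Module.support_eq_zeroLocus, Ideal.annihilator_quotient] at hp
    have hp : I ≤ p.asIdeal := hp
    rw [Module.support_eq_zeroLocus, Module.support_eq_zeroLocus]
    exact ⟨le_sup_left.trans hp, le_sup_right.trans hp⟩
  · intro r hr x
    obtain ⟨a, ha, b, hb, rfl⟩ := Submodule.mem_sup.1 hr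
    rw [add_smul]
    have h1 : a • x = 0 := smul_ext_eq_zero_left R (ModuleCat.of R M) (ModuleCat.of R N) a
      (Module.mem_annihilator.1 ha) i x
    have h2 : b • x = 0 := smul_ext_eq_zero_right R (ModuleCat.of R M) (ModuleCat.of R N) b
      (Module.mem_annihilator.1 hb) i x
    rw [h1, h2, add_zero]
end

section
/- Let φ : (R,m) → (S,n) be a flat local homomorphism of commutative Noetherian local rings such that the induced map R/m → S/mS is an isomorphism, and let M and N be finitely generated R-modules. If for each i with 0 ≤ i ≤ dim_R(N) − 1 the R-module Ext^i_R(M,N) has an S-module structure compatible with its R-module structure via φ, then for every prime ideal p ∈ Supp_R(M) ∩ Supp_R(N) the induced ring map R/p → S/pS is an isomorphism. -/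
universe u

open CategoryTheory TensorProduct

section Bridge

variable {R : Type u} [CommRing R] {X Y : ModuleCat.{u} R} (P : ProjectiveResolution X)

theorem extMk_zero_imp (f : P.complex.X 0 ⟶ Y)
    (hf : P.complex.d 1 0 ≫ f = 0) (h0 : P.extMk f 1 rfl hf = 0) : f = 0 := by
  rw [← P.extEquivCohomologyClass.apply_eq_iff_eq,
    ProjectiveResolution.extEquivCohomologyClass_extMk,
    ProjectiveResolution.extEquivCohomologyClass_zero,
    CochainComplex.HomComplex.CohomologyClass.mk_eq_zero_iff,
    CochainComplex.HomComplex.Cocycle.toSingleMk_mem_coboundaries_iff _ _ _ _ _ 1 (by simp)] at h0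
  obtain ⟨g, hg⟩ := h0
  have hz : g = 0 :=
    (CochainComplex.isZero_of_isStrictlyLE P.cochainComplex 0 1).eq_of_src _ _
  rw [hz, Limits.comp_zero] at hg
  rw [← cancel_epi (P.cochainComplexXIso (-(0 : ℕ)) 0 rfl).hom, ← hg, Limits.comp_zero]

theorem extMk_smul {n : ℕ} (r : R) (f : P.complex.X n ⟶ Y) (m : ℕ) (hm : n + 1 = m)
    (hf : P.complex.d m n ≫ f = 0) :
    P.extMk (r • f) m hm (by simp [hf]) = r • P.extMk f m hm hf := by
  rw [Abelian.Ext.smul_eq_comp_mk₀, P.extMk_comp_mk₀]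
  simp

/-- elements of the cocycle module, as cocycle morphisms -/
noncomputable def cyc {n : ℕ} (z : (P.complex.linearYonedaObj R Y).cycles n) :
    P.complex.X n ⟶ Y :=
  ((P.complex.linearYonedaObj R Y).iCycles n).hom z

theorem cyc_d {n : ℕ} (z : (P.complex.linearYonedaObj R Y).cycles n) :
    P.complex.d (n + 1) n ≫ cyc P z = 0 := by
  have := congrArg (fun k => k.hom z) ((P.complex.linearYonedaObj R Y).iCycles_d n (n + 1))
  exact this

theorem cyc_surj {n : ℕ} (f : P.complex.X n ⟶ Y) (hf : P.complex.d (n + 1) n ≫ f = 0) :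
    ∃ z : (P.complex.linearYonedaObj R Y).cycles n, cyc P z = f := by
  let K := P.complex.linearYonedaObj R Y
  let k : ModuleCat.of R R ⟶ K.X n :=
    ModuleCat.ofHom (LinearMap.toSpanSingleton R (P.complex.X n ⟶ Y) f)
  have hk : k ≫ K.d n (n + 1) = 0 := by
    ext
    change P.complex.d (n + 1) n ≫ ((1 : R) • f) = 0
    simp [hf]
  refine ⟨(K.liftCycles k (n + 1) (by simp) hk).hom (1 : R), ?_⟩
  have := congrArg (fun k => k.hom (1 : R)) (K.liftCycles_i k (n + 1) (by simp) hk)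
  change (K.iCycles n).hom _ = _
  simp only [ModuleCat.hom_comp, LinearMap.comp_apply] at this
  rw [this]
  change (1 : R) • f = f
  simp

/-- comparison from cocycles to the derived category Ext -/
noncomputable def cycToExt (n : ℕ) :
    (P.complex.linearYonedaObj R Y).cycles n →ₗ[R] Abelian.Ext X Y n where
  toFun z := P.extMk (cyc P z) (n + 1) rfl (cyc_d P z)
  map_add' a b := by
    rw [P.add_extMk]
    congr 1
    exact map_add _ _ _
  map_smul' r a := by
    rw [RingHom.id_apply, ← extMk_smul]
    congr 1
    exact map_smul _ _ _

theorem cycToExt_surj (n : ℕ) : Function.Surjective (cycToExt (Y := Y) P n) := by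
  intro α
  obtain ⟨f, hf, rfl⟩ := P.extMk_surjective α (n + 1) rfl
  obtain ⟨z, rfl⟩ := cyc_surj P f hf
  exact ⟨z, rfl⟩

theorem cyc_inj {n : ℕ} {z w : (P.complex.linearYonedaObj R Y).cycles n}
    (h : cyc P z = cyc P w) : z = w :=
  (ModuleCat.mono_iff_injective ((P.complex.linearYonedaObj R Y).iCycles n)).1 inferInstance h

theorem ker_homologyπ (n : ℕ) (i : ℕ) (hi : (ComplexShape.up ℕ).prev n = i)
    (z : (P.complex.linearYonedaObj R Y).cycles n) :
    ((P.complex.linearYonedaObj R Y).homologyπ n).hom z = 0 ↔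
      ∃ g : P.complex.X i ⟶ Y, P.complex.d n i ≫ g = cyc P z := by
  let K := P.complex.linearYonedaObj R Y
  have hex : (ShortComplex.mk (K.toCycles i n) (K.homologyπ n) (by simp)).Exact :=
    ShortComplex.exact_of_g_is_cokernel _ (K.homologyIsCokernel i n hi)
  constructor
  · intro h
    obtain ⟨g, hg⟩ := (ShortComplex.moduleCat_exact_iff _).1 hex z h
    refine ⟨g, ?_⟩
    have := congrArg (fun k => k.hom g) (K.toCycles_i i n)
    simp only [ModuleCat.hom_comp, LinearMap.comp_apply] at this
    rw [← hg]
    exact this.symm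
  · rintro ⟨g, hg⟩
    have : z = (K.toCycles i n).hom g := by
      apply cyc_inj
      rw [← hg]
      have := congrArg (fun k => k.hom g) (K.toCycles_i i n)
      simp only [ModuleCat.hom_comp, LinearMap.comp_apply] at this
      exact this.symm
    rw [this]
    exact congrArg (fun k => k.hom g) (K.toCycles_comp_homologyπ i n)

theorem ker_eq (n : ℕ) : LinearMap.ker (cycToExt (Y := Y) P n) =
    LinearMap.ker ((P.complex.linearYonedaObj R Y).homologyπ n).hom := by
  ext z
  rw [LinearMap.mem_ker, LinearMap.mem_ker]
  cases n with
  | zero =>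
    rw [ker_homologyπ P 0 0 (by simp)]
    constructor
    · intro h
      exact ⟨0, by rw [extMk_zero_imp P _ (cyc_d P z) h]; simp⟩
    · rintro ⟨g, hg⟩
      have : cyc P z = 0 := by rw [← hg, P.complex.shape _ _ (by simp)]; simp
      change P.extMk (cyc P z) (0 + 1) rfl (cyc_d P z) = 0
      simp [this]
  | succ n =>
    rw [ker_homologyπ P (n + 1) n (by simp)]
    exact P.extMk_eq_zero_iff _ _ rfl (cyc_d P z) n rfl

end Bridge

/-- old Ext vs. new Ext -/
theorem extModule_equiv (R : Type u) [CommRing R] (M N : Type u) [AddCommGroup M]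
    [Module R M] [AddCommGroup N] [Module R N] (i : ℕ) :
    Nonempty (extModule R M N i ≃ₗ[R]
      Abelian.Ext (ModuleCat.of R M) (ModuleCat.of R N) i) := by
  let P := projectiveResolution (ModuleCat.of R M)
  have hs : Function.Surjective
      ((P.complex.linearYonedaObj R (ModuleCat.of R N)).homologyπ i).hom :=
    (ModuleCat.epi_iff_surjective _).1 inferInstance
  exact ⟨(P.isoExt i (ModuleCat.of R N)).toLinearEquiv ≪≫ₗ
    (LinearMap.quotKerEquivOfSurjective _ hs).symm ≪≫ₗ
    Submodule.quotEquivOfEq _ _ (ker_eq P i).symm ≪≫ₗ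
    LinearMap.quotKerEquivOfSurjective _ (cycToExt_surj P i)⟩

section Depth

variable {R : Type u} [CommRing R]

theorem notMem_support_ext_X₃ {X : ModuleCat.{u} R} {S : ShortComplex (ModuleCat.{u} R)}
    (hS : S.ShortExact) (p : PrimeSpectrum R) (n : ℕ)
    (h2 : p ∉ Module.support R (Abelian.Ext X S.X₂ n))
    (h1 : p ∉ Module.support R (Abelian.Ext X S.X₁ (n + 1))) :
    p ∉ Module.support R (Abelian.Ext X S.X₃ n) := by
  rw [Module.notMem_support_iff'] at *
  intro x
  obtain ⟨r, hr, hrx⟩ := h1 (x.comp hS.extClass rfl)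
  rw [← Abelian.Ext.smul_comp] at hrx
  obtain ⟨y, hy⟩ := Abelian.Ext.covariant_sequence_exact₃ X hS _ rfl hrx
  obtain ⟨s, hs, hsy⟩ := h2 y
  refine ⟨s * r, fun h => (p.2.mem_or_mem h).elim hs hr, ?_⟩
  rw [mul_smul, ← hy, ← Abelian.Ext.smul_comp, hsy, Abelian.Ext.zero_comp]

theorem notMem_support_ext_of_notMem {X Y : ModuleCat.{u} R} [Module.Finite R Y]
    (p : PrimeSpectrum R) (h : p ∉ Module.support R Y) (n : ℕ) :
    p ∉ Module.support R (Abelian.Ext X Y n) := by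
  rw [Module.mem_support_iff_of_finite, SetLike.not_le_iff_exists] at h
  obtain ⟨s, hs, hsp⟩ := h
  rw [Module.notMem_support_iff']
  intro x
  refine ⟨s, hsp, ?_⟩
  have : s • 𝟙 Y = 0 := by
    ext y
    exact Module.mem_annihilator.1 hs y
  rw [Abelian.Ext.smul_eq_comp_mk₀, this]
  simp

theorem mem_support_hom [IsNoetherianRing R] {M N : Type u} [AddCommGroup M] [Module R M]
    [Module.Finite R M] [AddCommGroup N] [Module R N] [Module.Finite R N]
    (p : PrimeSpectrum R) (hM : p ∈ Module.support R M)
    (hN : p.asIdeal ∈ associatedPrimes R N) : p ∈ Module.support R (M →ₗ[R] N) := by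
  have hnt : Nontrivial (M →ₗ[R] (R ⧸ p.asIdeal)) := by
    rw [← not_subsingleton_iff_nontrivial, IsSMulRegular.subsingleton_linearMap_iff]
    rintro ⟨r, hr, hreg⟩
    have h1 : r ∈ p.asIdeal := Module.annihilator_le_of_mem_support hM hr
    have : (1 : R ⧸ p.asIdeal) = 0 := by
      apply hreg
      simp only [smul_zero]
      rw [Algebra.smul_def, mul_one]
      exact Ideal.Quotient.eq_zero_iff_mem.2 h1
    exact one_ne_zero this
  obtain ⟨f, hf⟩ := exists_ne (0 : M →ₗ[R] (R ⧸ p.asIdeal))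
  obtain ⟨i, hi⟩ := ((isAssociatedPrime_iff_exists_injective_linearMap _ _).1 hN).2
  rw [Module.mem_support_iff']
  refine ⟨i ∘ₗ f, fun r hr h0 => hf ?_⟩
  ext m
  have h1 := LinearMap.congr_fun h0 m
  simp only [LinearMap.smul_apply, LinearMap.comp_apply, LinearMap.zero_apply] at h1
  rw [← map_smul, ← map_zero i] at h1
  have h2 := hi h1
  rw [Algebra.smul_def, mul_eq_zero] at h2
  rcases h2 with h2 | h2
  · exact absurd (Ideal.Quotient.eq_zero_iff_mem.1 h2) hr
  · simpa using h2

open Pointwise in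
theorem exists_mem_support_ext [IsNoetherianRing R] {M : Type u} [AddCommGroup M] [Module R M]
    [Module.Finite R M] (p : PrimeSpectrum R) (hM : p ∈ Module.support R M) (n : ℕ) :
    ∀ (N : Type u) [AddCommGroup N] [Module R N] [Module.Finite R N],
      p ∈ Module.support R N →
      (∀ l : LTSeries (PrimeSpectrum R), l.last = p → l.head ∈ Module.support R N →
        l.length ≤ n) →
      ∃ i ≤ n, p ∈ Module.support R
        (Abelian.Ext (ModuleCat.of R M) (ModuleCat.of R N) i) := by
  induction n using Nat.strong_induction_on with | _ n ih
  intro N _ _ _ hN hl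
  by_cases hass : p.asIdeal ∈ associatedPrimes R N
  · refine ⟨0, Nat.zero_le _, ?_⟩
    rw [LinearEquiv.support_eq (Abelian.Ext.linearEquiv₀.trans ModuleCat.homLinearEquiv)]
    exact mem_support_hom p hM hass
  have hx : ∃ x ∈ p.asIdeal, ∀ q ∈ associatedPrimes R N, q ≤ p.asIdeal → x ∉ q := by
    by_contra! hcon
    have hfin : {q ∈ associatedPrimes R N | q ≤ p.asIdeal}.Finite :=
      (associatedPrimes.finite R N).subset (fun _ h => h.1)
    have := (Ideal.subset_union_prime_finite (f := id) (I := p.asIdeal) hfin ⊥ ⊥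
      (fun I hI _ _ => hI.1.isPrime)).1 (by
        intro x hx
        obtain ⟨q, h1, h2, h3⟩ := hcon x hx
        exact Set.mem_biUnion (x := q) ⟨h1, h2⟩ h3)
    obtain ⟨q, hq, hpq⟩ := this
    exact hass (le_antisymm hq.2 hpq ▸ hq.1)
  obtain ⟨x, hxp, hx⟩ := hx
  have hsup : p ∈ Module.support R (QuotSMulTop x N) := by
    rw [Module.support_quotSMulTop]
    exact ⟨hN, by simpa using hxp⟩
  have hl' : ∀ l : LTSeries (PrimeSpectrum R), l.last = p →
      l.head ∈ Module.support R (QuotSMulTop x N) →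
      l.length + 1 ≤ n := by
    intro l hlast hhead
    rw [Module.support_quotSMulTop] at hhead
    obtain ⟨q, hq, hqle⟩ := Ideal.exists_minimalPrimes_le
      (Module.annihilator_le_of_mem_support hhead.1)
    have hqass := Module.associatedPrimes.minimalPrimes_annihilator_subset_associatedPrimes R N hq
    have hlep : l.head ≤ p := hlast ▸ l.head_le_last
    have hxq := hx q hqass (hqle.trans hlep)
    have hxh : x ∈ l.head.asIdeal := by simpa using hhead.2
    let q' : PrimeSpectrum R := ⟨q, hqass.isPrime⟩
    have hlt : q' < l.head :=
      lt_of_le_of_ne hqle (fun h => hxq (by rw [← h] at hxh; exact hxh))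
    have := hl (l.cons q' hlt) (by simpa using hlast) (by
      simpa using Module.mem_support_iff_of_finite.2 hq.1.2)
    rw [RelSeries.cons_length] at this
    exact this
  have hn0 := hl' (RelSeries.singleton _ p) rfl hsup
  obtain ⟨m, rfl⟩ : ∃ m, n = m + 1 := ⟨n - 1, by lia⟩
  obtain ⟨i, hi, hip⟩ := ih m (Nat.lt_succ_self m) (QuotSMulTop x N) hsup
    (fun l h1 h2 => Nat.le_of_succ_le_succ (hl' l h1 h2))
  by_contra! hcon
  let A : Submodule R N := x • ⊤
  let f : N →ₗ[R] A := LinearMap.codRestrict A (LinearMap.lsmul R N x)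
    (fun y => Submodule.smul_mem_pointwise_smul y x ⊤ trivial)
  have hf : Function.Surjective f := by
    rintro ⟨y, hy⟩
    obtain ⟨z, -, rfl⟩ := hy
    exact ⟨z, rfl⟩
  have hK : p ∉ Module.support R (LinearMap.ker f) := by
    intro hK
    obtain ⟨q, hq, hqle⟩ := Ideal.exists_minimalPrimes_le
      (Module.annihilator_le_of_mem_support hK)
    have hqass := associatedPrimes.subset_of_injective
      (LinearMap.ker f).injective_subtype
      (Module.associatedPrimes.minimalPrimes_annihilator_subset_associatedPrimes R _ hq)
    refine hx q hqass hqle (hq.1.2 (Module.mem_annihilator.2 ?_))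
    rintro ⟨k, hk⟩
    ext
    exact congr_arg (fun z : A => (z : N)) (show f k = 0 from hk)
  have s1 := LinearMap.shortExact_shortComplexKer hf
  let S2 : ShortComplex (ModuleCat.{u} R) := ShortComplex.moduleCatMk A.subtype A.mkQ
    (by ext; simp)
  have s2 : S2.ShortExact := ModuleCat.shortComplex_shortExact _
    (LinearMap.exact_subtype_mkQ A) A.injective_subtype A.mkQ_surjective
  have hA : p ∉ Module.support R
      (Abelian.Ext (ModuleCat.of R M) (ModuleCat.of R A) (i + 1)) := by
    refine notMem_support_ext_X₃ s1 p (i + 1) (hcon (i + 1) (by lia)) ?_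
    have : Module.Finite R f.shortComplexKer.X₁ :=
      inferInstanceAs (Module.Finite R (LinearMap.ker f))
    exact notMem_support_ext_of_notMem p hK _
  exact notMem_support_ext_X₃ s2 p i (hcon i (by lia)) hA hip

end Depth

section Ascent

variable {R S : Type u} [CommRing R] [CommRing S] [IsLocalRing R] [IsLocalRing S]
    [IsNoetherianRing R] [IsNoetherianRing S] [Algebra R S]
    [IsLocalHom (algebraMap R S)]

theorem top_le_sup_pow
    (hres : ∀ s : S, ∃ r : R, s - algebraMap R S r ∈
      (IsLocalRing.maximalIdeal R).map (algebraMap R S)) (k : ℕ) :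
    (⊤ : Submodule R S) ≤ LinearMap.range (Algebra.linearMap R S) ⊔
      (IsLocalRing.maximalIdeal R ^ k) • ⊤ := by
  induction k with
  | zero => rw [pow_zero, Ideal.one_eq_top, Submodule.top_smul]; exact le_sup_right
  | succ k ih =>
    have h1 : (⊤ : Submodule R S) ≤ LinearMap.range (Algebra.linearMap R S) ⊔
      (IsLocalRing.maximalIdeal R) • ⊤ := by
      intro s _
      obtain ⟨r, hr⟩ := hres s
      rw [← add_sub_cancel (algebraMap R S r) s]
      refine Submodule.add_mem_sup ⟨r, rfl⟩ ?_
      rw [Ideal.smul_top_eq_map]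
      exact hr
    refine ih.trans (sup_le le_sup_left ?_)
    calc IsLocalRing.maximalIdeal R ^ k • (⊤ : Submodule R S)
        ≤ IsLocalRing.maximalIdeal R ^ k • (LinearMap.range (Algebra.linearMap R S) ⊔
            (IsLocalRing.maximalIdeal R) • ⊤) := Submodule.smul_mono le_rfl h1
      _ ≤ _ := by
        rw [Submodule.smul_sup, ← Submodule.mul_smul, ← pow_succ]
        exact sup_le_sup_right Submodule.smul_le_right _

theorem surj_of_compatible {L : Type u} [AddCommGroup L] [Module R L] [Module.Finite R L]
    [Module S L] [IsScalarTower R S L]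
    (hres : ∀ s : S, ∃ r : R, s - algebraMap R S r ∈
      (IsLocalRing.maximalIdeal R).map (algebraMap R S))
    (p : PrimeSpectrum R) (hp : p ∈ Module.support R L) (s : S) :
    ∃ r : R, s - algebraMap R S r ∈ p.asIdeal.map (algebraMap R S) := by
  rw [Module.mem_support_iff_exists_annihilator] at hp
  obtain ⟨x, hx⟩ := hp
  let g : S →ₗ[R] L := (LinearMap.toSpanSingleton S L x).restrictScalars R
  have hg : ∀ t, g t = t • x := fun t => rfl
  have hW : (LinearMap.range (Algebra.linearMap R S)).map g ≤ Submodule.span R {x} := by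
    rintro _ ⟨_, ⟨r, rfl⟩, rfl⟩
    rw [hg, Algebra.linearMap_apply, algebraMap_smul]
    exact Submodule.smul_mem _ _ (Submodule.mem_span_singleton_self x)
  have hT : (⊤ : Submodule R S).map g ≤ Submodule.span R {x} := by
    refine Submodule.le_of_le_smul_of_le_jacobson_bot (I := IsLocalRing.maximalIdeal R)
      (IsNoetherian.noetherian _) (IsLocalRing.maximalIdeal_le_jacobson _) ?_
    have := Submodule.map_mono (f := g) (top_le_sup_pow hres 1)
    rw [Submodule.map_sup, pow_one, Submodule.map_smul''] at this
    exact this.trans (sup_le_sup_right hW _)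
  have hJ : ∀ b : S, b • x = 0 → b ∈ p.asIdeal.map (algebraMap R S) := by
    intro b hb
    have key : ∀ k : ℕ, ∃ c ∈ (IsLocalRing.maximalIdeal R).map (algebraMap R S) ^ k,
        b - c ∈ p.asIdeal.map (algebraMap R S) := by
      intro k
      obtain ⟨_, ⟨a, rfl⟩, c, hc, hac⟩ := Submodule.mem_sup.1
        (top_le_sup_pow hres k (Submodule.mem_top (x := b)))
      have h1 : c • x ∈ (IsLocalRing.maximalIdeal R ^ k) • Submodule.span R {x} := by
        refine Submodule.smul_mono le_rfl hT ?_
        rw [← Submodule.map_smul'']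
        exact ⟨c, hc, rfl⟩
      obtain ⟨a', ha', hax⟩ := Submodule.mem_smul_span_singleton.1 h1
      rw [Ideal.smul_top_eq_map, Ideal.map_pow] at hc
      refine ⟨c - algebraMap R S a', sub_mem hc ?_, ?_⟩
      · rw [← Ideal.map_pow]
        exact Ideal.mem_map_of_mem _ ha'
      · have h2 : a + a' ∈ p.asIdeal := by
          apply hx
          rw [Submodule.mem_annihilator_span_singleton, add_smul, hax,
            ← algebraMap_smul S a x, ← add_smul]
          rw [← hac] at hb
          exact hb
        have : b - (c - algebraMap R S a') = algebraMap R S (a + a') := by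
          rw [← hac, map_add, Algebra.linearMap_apply]; ring
        rw [this]
        exact Ideal.mem_map_of_mem _ h2
    have hne : (IsLocalRing.maximalIdeal R).map (algebraMap R S) ≠ ⊤ := by
      intro h
      have := ((IsLocalRing.local_hom_TFAE (algebraMap R S)).out 0 2).1 ‹_›
      exact (IsLocalRing.maximalIdeal.isMaximal S).ne_top (top_le_iff.1 (h ▸ this))
    have hkr := Ideal.iInf_pow_smul_eq_bot_of_isLocalRing
      (M := S ⧸ p.asIdeal.map (algebraMap R S)) _ hne
    rw [← Ideal.Quotient.eq_zero_iff_mem, ← Submodule.mem_bot S, ← hkr, Submodule.mem_iInf]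
    intro k
    obtain ⟨c, hc, hbc⟩ := key k
    rw [Ideal.Quotient.eq.2 hbc]
    have : (Ideal.Quotient.mk (p.asIdeal.map (algebraMap R S))) c =
      c • (1 : S ⧸ p.asIdeal.map (algebraMap R S)) := by
      rw [Algebra.smul_def, mul_one]; rfl
    rw [this]
    exact Submodule.smul_mem_smul hc trivial
  obtain ⟨r, hr⟩ := Submodule.mem_span_singleton.1 (hT ⟨s, trivial, rfl⟩)
  refine ⟨r, hJ _ ?_⟩
  rw [sub_smul, algebraMap_smul, hr, hg, sub_self]

end Ascent

/-- Let `φ : (R, m) → (S, n)` be a flat local homomorphism of commutative Noetherian local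
rings such that `R/m → S/mS` is an isomorphism, and let `M`, `N` be finitely generated
`R`-modules. If `Ext^i_R(M, N)` has a compatible `S`-module structure for
`i = 0, …, dim_R(N) - 1` (i.e. for all `i < dim_R(N)`, where `dim_R(N)` is the Krull
dimension of `R ⧸ Ann_R(N)`), then `R/p → S/pS` is an isomorphism for every prime
`p ∈ Supp_R M ∩ Supp_R N`. -/
theorem support_bijective_of_ext_hasCompatibleSModule
    (R S : Type u) [CommRing R] [CommRing S] [IsLocalRing R] [IsLocalRing S]
    [IsNoetherianRing R] [IsNoetherianRing S] [Algebra R S] [Module.Flat R S]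
    [IsLocalHom (algebraMap R S)]
    (hres : Function.Bijective
      (Ideal.quotientMap ((IsLocalRing.maximalIdeal R).map (algebraMap R S)) (algebraMap R S)
        Ideal.le_comap_map))
    (M N : Type u) [AddCommGroup M] [Module R M] [Module.Finite R M]
    [AddCommGroup N] [Module R N] [Module.Finite R N]
    (h : ∀ i : ℕ, ((i : ℕ∞) : WithBot ℕ∞) < ringKrullDim (R ⧸ Module.annihilator R N) →
      HasCompatibleSModule R S (extModule R M N i)) :
    ∀ p : PrimeSpectrum R, p ∈ Module.support R M ∩ Module.support R N →
      Function.Bijective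
        (Ideal.quotientMap (p.asIdeal.map (algebraMap R S)) (algebraMap R S)
          Ideal.le_comap_map) := by
  rintro p ⟨hpM, hpN⟩
  by_cases hpm : p.asIdeal = IsLocalRing.maximalIdeal R
  · obtain ⟨I, hI⟩ := p
    dsimp only at hpm
    subst hpm
    exact hres
  have hff : Module.FaithfullyFlat R S := Module.FaithfullyFlat.of_flat_of_isLocalHom
  refine ⟨Ideal.quotientMap_injective' (Ideal.comap_map_eq_self_of_faithfullyFlat _).le, ?_⟩
  have hres' : ∀ s : S, ∃ r : R, s - algebraMap R S r ∈
      (IsLocalRing.maximalIdeal R).map (algebraMap R S) := by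
    intro s
    obtain ⟨r, hr⟩ := hres.2 (Ideal.Quotient.mk _ s)
    obtain ⟨r, rfl⟩ := Ideal.Quotient.mk_surjective r
    rw [Ideal.quotientMap_mk] at hr
    exact ⟨r, Ideal.Quotient.eq.1 hr.symm⟩
  have hlen : ∀ l : LTSeries (PrimeSpectrum R), l.last = p → l.head ∈ Module.support R N →
      ((l.length + 1 : ℕ) : WithBot ℕ∞) ≤ Module.supportDim R N := by
    intro l hlast hhead
    have hlt : l.last < IsLocalRing.closedPoint R := by
      rw [hlast]
      exact lt_of_le_of_ne (IsLocalRing.le_maximalIdeal p.2.ne_top)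
        (fun h => hpm (congr_arg PrimeSpectrum.asIdeal h))
    let l2 := l.snoc _ hlt
    have hh : l2.head ∈ Module.support R N := by
      rw [RelSeries.head_snoc]; exact hhead
    let l3 : LTSeries (Module.support R N) :=
      { length := l2.length
        toFun := fun i => ⟨l2 i, Module.mem_support_mono (LTSeries.head_le l2 i) hh⟩
        step := fun i => l2.step i }
    exact Order.LTSeries.length_le_krullDim l3
  have hle : Module.supportDim R N < ⊤ :=
    (Module.supportDim_le_ringKrullDim R N).trans_lt ringKrullDim_lt_top
  obtain ⟨d, hd⟩ : ∃ d : ℕ, Module.supportDim R N = ((d : ℕ∞) : WithBot ℕ∞) := by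
    have h0 := hlen (RelSeries.singleton _ p) rfl hpN
    generalize Module.supportDim R N = D at *
    induction D with
    | bot => simp at h0
    | coe D =>
      induction D with
      | top => exact absurd hle (lt_irrefl _)
      | coe d => exact ⟨d, rfl⟩
  rw [hd] at hlen
  have hlen' : ∀ l : LTSeries (PrimeSpectrum R), l.last = p →
      l.head ∈ Module.support R N → l.length + 1 ≤ d := by
    intro l h1 h2
    exact_mod_cast hlen l h1 h2
  have hd1 := hlen' (RelSeries.singleton _ p) rfl hpN
  obtain ⟨i, hi, hip⟩ := exists_mem_support_ext p hpM (d - 1) N hpN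
    (fun l h1 h2 => by have := hlen' l h1 h2; lia)
  obtain ⟨e⟩ := extModule_equiv R M N i
  rw [← e.support_eq] at hip
  have hfin : Module.Finite R (extModule R M N i) := Module.Finite.equiv e.symm
  obtain ⟨inst, hc⟩ := h i (by
    rw [← Module.supportDim_eq_ringKrullDim_quotient_annihilator, hd]
    have : i < d := by lia
    exact_mod_cast this)
  have : IsScalarTower R S (extModule R M N i) := IsScalarTower.of_algebraMap_smul hc
  intro y
  obtain ⟨s, rfl⟩ := Ideal.Quotient.mk_surjective y
  obtain ⟨r, hr⟩ := surj_of_compatible hres' p hip s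
  refine ⟨Ideal.Quotient.mk _ r, ?_⟩
  rw [Ideal.quotientMap_mk]
  exact (Ideal.Quotient.eq.2 hr).symm
end

section
/- Let φ : (R,m) → (S,n) be a flat local homomorphism of commutative Noetherian local rings such that the induced map R/m → S/mS is an isomorphism, and let M and N be finitely generated R-modules. If for every i ≥ 0 the R-module Ext^i_R(M,N) has an S-module structure compatible with its R-module structure via φ, then for every i ≥ 0 there is an isomorphism Ext^i_R(S ⊗_R M, N) ≅ Ext^i_R(M,N) of R-modules; in particular Ext^i_R(S ⊗_R M, N) is finitely generated over R for all i ≥ 0. -/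
universe u

open CategoryTheory TensorProduct

section ExtAux

variable {R : Type u} [CommRing R]

/-- Derived-category `Ext` for unbundled modules. -/
noncomputable abbrev EE (M N : Type u) [AddCommGroup M]
    [Module R M] [AddCommGroup N] [Module R N] (n : ℕ) : Type u :=
  Abelian.Ext.{u} (ModuleCat.of R M) (ModuleCat.of R N) n

variable {M M' M'' : Type u} [AddCommGroup M] [Module R M] [AddCommGroup M'] [Module R M']
  [AddCommGroup M''] [Module R M'']
variable {K K' : Type u} [AddCommGroup K] [Module R K] [AddCommGroup K'] [Module R K']
variable {Q Q' : Type u} [AddCommGroup Q] [Module R Q] [AddCommGroup Q'] [Module R Q']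
variable (N : Type u) [AddCommGroup N] [Module R N]

/-- Pullback of `Ext` classes. -/
noncomputable def epre (f : M →ₗ[R] M') (n : ℕ) :
    EE (R := R) M' N n →ₗ[R] EE (R := R) M N n :=
  (Abelian.Ext.mk₀ (ModuleCat.ofHom f)).precompOfLinear R (ModuleCat.of R N) (zero_add n)

lemma epre_apply (f : M →ₗ[R] M') (n : ℕ) (x : EE (R := R) M' N n) :
    epre N f n x = (Abelian.Ext.mk₀ (ModuleCat.ofHom f)).comp x (zero_add n) := rfl

lemma epre_comp (f : M →ₗ[R] M') (g : M' →ₗ[R] M'') (n : ℕ) (x : EE (R := R) M'' N n) :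
    epre N f n (epre N g n x) = epre N (g ∘ₗ f) n x := by
  simp [epre_apply, ModuleCat.ofHom_comp]

lemma epre_add (f g : M →ₗ[R] M') (n : ℕ) (x : EE (R := R) M' N n) :
    epre N (f + g) n x = epre N f n x + epre N g n x := by
  simp only [epre_apply]
  rw [← Abelian.Ext.add_comp, ← Abelian.Ext.mk₀_add]
  rfl

lemma epre_smul (r : R) (f : M →ₗ[R] M') (n : ℕ) (x : EE (R := R) M' N n) :
    epre N (r • f) n x = r • epre N f n x := by
  simp only [epre_apply]
  rw [← Abelian.Ext.smul_comp, ← Abelian.Ext.mk₀_smul]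
  rfl

lemma ses_mk {f : K →ₗ[R] Q} {g : Q →ₗ[R] M} (hf : Function.Injective f)
    (hg : Function.Surjective g) (H : Function.Exact f g) :
    (ShortComplex.mk (ModuleCat.ofHom f) (ModuleCat.ofHom g) (by
      ext x; exact H.apply_apply_eq_zero x)).ShortExact where
  exact := by
    rw [ShortComplex.moduleCat_exact_iff]
    intro x hx
    exact (H x).1 hx
  mono_f := (ModuleCat.mono_iff_injective _).2 hf
  epi_g := (ModuleCat.epi_iff_surjective _).2 hg

/-- connecting map -/
noncomputable def edel {f : K →ₗ[R] Q} {g : Q →ₗ[R] M} (hf : Function.Injective f)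
    (hg : Function.Surjective g) (H : Function.Exact f g) (n : ℕ) :
    EE (R := R) K N n →ₗ[R] EE (R := R) M N (n + 1) :=
  (ses_mk hf hg H).extClass.precompOfLinear R (ModuleCat.of R N) (add_comm 1 n)

lemma edel_apply {f : K →ₗ[R] Q} {g : Q →ₗ[R] M} (hf : Function.Injective f)
    (hg : Function.Surjective g) (H : Function.Exact f g) (n : ℕ) (x : EE (R := R) K N n) :
    edel N hf hg H n x = (ses_mk hf hg H).extClass.comp x (add_comm 1 n) := rfl

lemma exact_mid {f : K →ₗ[R] Q} {g : Q →ₗ[R] M} (hf : Function.Injective f)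
    (hg : Function.Surjective g) (H : Function.Exact f g) (n : ℕ) :
    Function.Exact (epre N g n) (epre N f n) := by
  intro x
  constructor
  · intro hx
    exact Abelian.Ext.contravariant_sequence_exact₂ (ses_mk hf hg H) _ x hx
  · rintro ⟨y, rfl⟩
    rw [epre_comp, H.linearMap_comp_eq_zero, epre_apply]
    have : ModuleCat.ofHom (0 : K →ₗ[R] M) = 0 := rfl
    rw [this, Abelian.Ext.mk₀_zero, Abelian.Ext.zero_comp]

lemma exact_del {f : K →ₗ[R] Q} {g : Q →ₗ[R] M} (hf : Function.Injective f)
    (hg : Function.Surjective g) (H : Function.Exact f g) (n : ℕ) :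
    Function.Exact (epre N f n) (edel N hf hg H n) := by
  intro x
  constructor
  · intro hx
    exact Abelian.Ext.contravariant_sequence_exact₁ (ses_mk hf hg H) _ x (add_comm 1 n) hx
  · rintro ⟨y, rfl⟩
    exact (ses_mk hf hg H).extClass_comp_assoc y (h := add_comm 1 n)

lemma exact_del' {f : K →ₗ[R] Q} {g : Q →ₗ[R] M} (hf : Function.Injective f)
    (hg : Function.Surjective g) (H : Function.Exact f g) (n : ℕ) :
    Function.Exact (edel N hf hg H n) (epre N g (n + 1)) := by
  intro x
  constructor
  · intro hx
    exact Abelian.Ext.contravariant_sequence_exact₃ (ses_mk hf hg H) _ x hx (add_comm 1 n)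
  · rintro ⟨y, rfl⟩
    exact (ses_mk hf hg H).comp_extClass_assoc y (add_comm 1 n)

lemma epre_zero_inj {g : Q →ₗ[R] M} (hg : Function.Surjective g) :
    Function.Injective (epre N g 0) := by
  rw [injective_iff_map_eq_zero]
  intro x hx
  obtain ⟨y, rfl⟩ := Abelian.Ext.addEquiv₀.symm.surjective x
  have : Epi (ModuleCat.ofHom g) := (ModuleCat.epi_iff_surjective _).2 hg
  rw [epre_apply] at hx
  simpa [← cancel_epi (ModuleCat.ofHom g)] using hx

lemma EE_proj [Module.Projective R M] (n : ℕ) (x : EE (R := R) M N (n + 1)) : x = 0 := by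
  have : Projective (ModuleCat.of R M) :=
    (IsProjective.iff_projective (R := R) M).1 inferInstance
  exact Abelian.Ext.eq_zero_of_projective x

lemma edel_nat {f : K →ₗ[R] Q} {g : Q →ₗ[R] M} (hf : Function.Injective f)
    (hg : Function.Surjective g) (H : Function.Exact f g)
    {f' : K' →ₗ[R] Q'} {g' : Q' →ₗ[R] M'} (hf' : Function.Injective f')
    (hg' : Function.Surjective g') (H' : Function.Exact f' g')
    (a : K →ₗ[R] K') (b : Q →ₗ[R] Q') (c : M →ₗ[R] M')
    (h1 : f' ∘ₗ a = b ∘ₗ f) (h2 : g' ∘ₗ b = c ∘ₗ g) (n : ℕ) (x : EE (R := R) K' N n) :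
    epre N c (n + 1) (edel N hf' hg' H' n x) = edel N hf hg H n (epre N a n x) := by
  have := ShortComplex.ShortExact.extClass_naturality (ses_mk hf hg H) (ses_mk hf' hg' H')
    (ShortComplex.Hom.mk (ModuleCat.ofHom a) (ModuleCat.ofHom b) (ModuleCat.ofHom c)
      (by dsimp; rw [← ModuleCat.ofHom_comp, h1, ModuleCat.ofHom_comp])
      (by dsimp; rw [← ModuleCat.ofHom_comp, h2, ModuleCat.ofHom_comp]))
  simp only [epre_apply, edel_apply]
  dsimp at this
  rw [← Abelian.Ext.comp_assoc (a₁₂ := 1) _ _ _ (by lia) (by lia) (by lia), ← this,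
    Abelian.Ext.comp_assoc (a₂₃ := n) _ _ _ (by lia) (by lia) (by lia)]

end ExtAux

section Theta

variable {R : Type u} [CommRing R]
variable {A A' : Type u} [AddCommGroup A] [Module R A] [AddCommGroup A'] [Module R A']
variable {M M' : Type u} [AddCommGroup M] [Module R M] [AddCommGroup M'] [Module R M']
variable {K Q : Type u} [AddCommGroup K] [Module R K] [AddCommGroup Q] [Module R Q]
variable (N : Type u) [AddCommGroup N] [Module R N]

variable (A M) in
/-- The comparison map `Ext^n(A ⊗ M, N) → Hom(A, Ext^n(M, N))`. -/
noncomputable def theta (n : ℕ) :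
    EE (R := R) (A ⊗[R] M) N n →ₗ[R] (A →ₗ[R] EE (R := R) M N n) where
  toFun x :=
    { toFun a := epre N (TensorProduct.mk R A M a) n x
      map_add' a b := by rw [map_add, epre_add]
      map_smul' r a := by rw [map_smul, epre_smul]; rfl }
  map_add' x y := by ext a; simp
  map_smul' r x := by ext a; simp

lemma theta_apply (n : ℕ) (x : EE (R := R) (A ⊗[R] M) N n) (a : A) :
    theta A M N n x a = epre N (TensorProduct.mk R A M a) n x := rfl

lemma theta_natA (f : A →ₗ[R] A') (n : ℕ) (x : EE (R := R) (A' ⊗[R] M) N n) :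
    theta A M N n (epre N (f.rTensor M) n x) = theta A' M N n x ∘ₗ f := by
  ext a
  simp only [theta_apply, epre_comp, LinearMap.comp_apply]
  congr 1

lemma theta_natM (g : M →ₗ[R] M') (n : ℕ) (x : EE (R := R) (A ⊗[R] M') N n) :
    theta A M N n (epre N (g.lTensor A) n x) = epre N g n ∘ₗ theta A M' N n x := by
  ext a
  simp only [theta_apply, epre_comp, LinearMap.comp_apply]
  congr 1

variable (A M) in
lemma theta_zero : Function.Bijective (theta (R := R) A M N 0) := by
  constructor
  · rw [injective_iff_map_eq_zero]
    intro x hx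
    obtain ⟨φ, rfl⟩ := Abelian.Ext.addEquiv₀.symm.surjective x
    have : φ = 0 := by
      apply ModuleCat.hom_ext
      apply TensorProduct.ext'
      intro a m
      have h := LinearMap.congr_fun hx a
      rw [theta_apply, epre_apply] at h
      simp only [Abelian.Ext.addEquiv₀_symm_apply, Abelian.Ext.mk₀_comp_mk₀,
        LinearMap.zero_apply, Abelian.Ext.mk₀_eq_zero_iff] at h
      exact LinearMap.congr_fun (congrArg ModuleCat.Hom.hom h) m
    rw [this, map_zero]
  · intro g
    let e : EE (R := R) M N 0 ≃ₗ[R] (M →ₗ[R] N) :=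
      (Abelian.Ext.linearEquiv₀ (R := R)).trans ModuleCat.homLinearEquiv
    refine ⟨Abelian.Ext.mk₀ (ModuleCat.ofHom (TensorProduct.lift (e.toLinearMap ∘ₗ g))), ?_⟩
    ext a
    apply e.injective
    rw [theta_apply, epre_apply, Abelian.Ext.mk₀_comp_mk₀]
    ext m
    have : ∀ φ : ModuleCat.of R M ⟶ ModuleCat.of R N, e (Abelian.Ext.mk₀ φ) = φ.hom := by
      intro φ
      have := (Abelian.Ext.linearEquiv₀ (R := R)).apply_symm_apply φ
      rw [Abelian.Ext.linearEquiv₀_symm_apply] at this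
      change ModuleCat.homLinearEquiv (S := R) (Abelian.Ext.linearEquiv₀ (R := R) _) = _
      rw [this]
      rfl
    rw [this]
    simp

lemma theta_del {f : K →ₗ[R] Q} {g : Q →ₗ[R] M} (hf : Function.Injective f)
    (hg : Function.Surjective g) (H : Function.Exact f g)
    (hf' : Function.Injective (f.lTensor A))
    (n : ℕ) (x : EE (R := R) (A ⊗[R] K) N n) :
    theta A M N (n + 1) (edel N hf' (LinearMap.lTensor_surjective A hg)
      (lTensor_exact A H hg) n x) = edel N hf hg H n ∘ₗ theta A K N n x := by
  ext a
  simp only [theta_apply, LinearMap.comp_apply]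
  apply edel_nat N hf hg H hf' (LinearMap.lTensor_surjective A hg)
    (lTensor_exact A H hg) (b := TensorProduct.mk R A Q a)
  · ext; simp
  · ext; simp

variable (M) in
lemma exists_free_pres : ∃ (Q K : Type u) (_ : AddCommGroup Q) (_ : Module R Q)
    (_ : AddCommGroup K) (_ : Module R K) (f : K →ₗ[R] Q) (g : Q →ₗ[R] M),
    Module.Projective R Q ∧ Function.Injective f ∧ Function.Surjective g ∧
      Function.Exact f g :=
  let g : (M →₀ R) →ₗ[R] M := Finsupp.linearCombination R id
  ⟨M →₀ R, LinearMap.ker g, inferInstance, inferInstance, inferInstance, inferInstance,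
    (LinearMap.ker g).subtype, g, inferInstance, Submodule.subtype_injective _,
    Finsupp.linearCombination_surjective _ Function.surjective_id,
    LinearMap.exact_subtype_ker_map g⟩

variable (A) in
lemma theta_proj [Module.Projective R A] (n : ℕ) :
    ∀ (M : Type u) [AddCommGroup M] [Module R M], Function.Bijective (theta (R := R) A M N n) := by
  induction n with
  | zero => intro M _ _; exact theta_zero A M N
  | succ n ih =>
    intro M _ _
    obtain ⟨Q, K, _, _, _, _, f, g, hQ, hf, hg, H⟩ := exists_free_pres (R := R) M
    have hf' : Function.Injective (f.lTensor A) :=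
      Module.Flat.lTensor_preserves_injective_linearMap f hf
    have hg' := LinearMap.lTensor_surjective A hg
    have H' := lTensor_exact A H hg
    have hs : Function.Surjective (edel N hf hg H n) := fun x =>
      (exact_del' N hf hg H n x).1 (EE_proj N n _)
    have hs' : Function.Surjective (edel N hf' hg' H' n) := fun x =>
      (exact_del' N hf' hg' H' n x).1 (EE_proj N n _)
    constructor
    · rw [injective_iff_map_eq_zero]
      intro x hx
      obtain ⟨y, rfl⟩ := hs' x
      rw [theta_del N hf hg H hf'] at hx
      have h1 : ∀ a, theta A K N n y a ∈ LinearMap.range (epre N f n) := by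
        intro a
        exact (exact_del N hf hg H n _).1 (LinearMap.congr_fun hx a)
      obtain ⟨l, hl⟩ := Module.projective_lifting_property
        (epre N f n).rangeRestrict ((theta A K N n y).codRestrict _ h1)
        (LinearMap.surjective_rangeRestrict _)
      obtain ⟨z, rfl⟩ := (ih Q).2 l
      have h2 : theta A K N n y = theta A K N n (epre N (f.lTensor A) n z) := by
        rw [theta_natM]
        ext a
        have := congrArg Subtype.val (LinearMap.congr_fun hl a)
        exact this.symm
      rw [(ih K).1 h2]
      exact (exact_del N hf' hg' H' n _).2 ⟨z, rfl⟩
    · intro l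
      obtain ⟨l', hl'⟩ := Module.projective_lifting_property _ l hs
      obtain ⟨y, rfl⟩ := (ih K).2 l'
      exact ⟨edel N hf' hg' H' n y, by rw [theta_del N hf hg H hf', hl']⟩

end Theta

section Cond

variable {R : Type u} [CommRing R]
variable {K P A : Type u} [AddCommGroup A] [Module R A] [AddCommGroup K] [Module R K]
  [AddCommGroup P] [Module R P]
variable {f : K →ₗ[R] P} {g : P →ₗ[R] A}

lemma flat_ker [Module.Flat R A] [Module.Flat R P] (hf : Function.Injective f)
    (hg : Function.Surjective g) (H : Function.Exact f g) : Module.Flat R K := by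
  rw [Module.Flat.iff_rTensor_preserves_injective_linearMap]
  intro X Y _ _ _ _ i hi
  have h1 : Function.Injective (f.lTensor X) :=
    LinearMap.lTensor_injective_of_exact_of_flat g hg f hf H X
  have h2 : Function.Injective (i.rTensor P) :=
    Module.Flat.rTensor_preserves_injective_linearMap i hi
  have h3 : f.lTensor Y ∘ₗ i.rTensor K = i.rTensor P ∘ₗ f.lTensor X := by
    ext; simp
  have h4 : Function.Injective (f.lTensor Y ∘ₗ i.rTensor K) := by
    rw [h3]; exact h2.comp h1
  exact Function.Injective.of_comp (f := f.lTensor Y) h4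

lemma cond_split (I : Ideal R) [Module.Flat R A] (hf : Function.Injective f)
    (hg : Function.Surjective g) (H : Function.Exact f g)
    [Module.Projective (R ⧸ I) ((R ⧸ I) ⊗[R] A)] :
    ∃ ρ : (R ⧸ I) ⊗[R] P →ₗ[R ⧸ I] (R ⧸ I) ⊗[R] K,
      ρ ∘ₗ f.baseChange (R ⧸ I) = LinearMap.id := by
  have h1 : Function.Injective (f.baseChange (R ⧸ I)) :=
    LinearMap.lTensor_injective_of_exact_of_flat g hg f hf H (R ⧸ I)
  have h2 : Function.Surjective (g.baseChange (R ⧸ I)) := LinearMap.lTensor_surjective _ hg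
  have h3 : Function.Exact (f.baseChange (R ⧸ I)) (g.baseChange (R ⧸ I)) :=
    lTensor_exact (R ⧸ I) H hg
  obtain ⟨s, hs⟩ := Module.projective_lifting_property _ LinearMap.id h2
  have := (Function.Exact.split_tfae h3 h1 h2).out 0 1
  exact this.1 ⟨s, hs⟩

lemma cond_proj (I : Ideal R) [Module.Flat R A] (hf : Function.Injective f)
    (hg : Function.Surjective g) (H : Function.Exact f g) [Module.Projective R P]
    [Module.Projective (R ⧸ I) ((R ⧸ I) ⊗[R] A)] :
    Module.Projective (R ⧸ I) ((R ⧸ I) ⊗[R] K) := by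
  obtain ⟨ρ, hρ⟩ := cond_split I hf hg H
  exact Module.Projective.of_split _ ρ hρ

lemma cond_ext (L : Type u) [AddCommGroup L] [Module R L] (I : Ideal R)
    (hI : ∀ r ∈ I, ∀ x : L, r • x = 0) [Module.Flat R A] (hf : Function.Injective f)
    (hg : Function.Surjective g) (H : Function.Exact f g)
    [Module.Projective (R ⧸ I) ((R ⧸ I) ⊗[R] A)] (h : K →ₗ[R] L) :
    ∃ h' : P →ₗ[R] L, h' ∘ₗ f = h := by
  obtain ⟨ρ, hρ⟩ := cond_split I hf hg H
  let u : (R ⧸ I) →ₗ[R] (K →ₗ[R] L) := Submodule.liftQ I (LinearMap.toSpanSingleton R _ h) (by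
    intro r hr
    rw [LinearMap.mem_ker]
    ext k
    simpa using hI r hr (h k))
  refine ⟨TensorProduct.lift u ∘ₗ ρ.restrictScalars R ∘ₗ TensorProduct.mk R (R ⧸ I) P 1, ?_⟩
  ext k
  have := LinearMap.congr_fun hρ (1 ⊗ₜ k)
  simp only [LinearMap.comp_apply, LinearMap.baseChange_tmul, LinearMap.id_apply] at this
  simp only [LinearMap.comp_apply, TensorProduct.mk_apply, LinearMap.restrictScalars_apply, this,
    TensorProduct.lift.tmul]
  have : u 1 = h := by
    change u (Submodule.Quotient.mk 1) = h
    simp only [u, Submodule.liftQ_apply]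
    simp
  rw [this]

/-- main comparison -/
lemma theta_main (M N : Type u) [AddCommGroup M] [Module R M] [AddCommGroup N] [Module R N]
    (I : ℕ → Ideal R) (hI : ∀ n, ∀ r ∈ I n, ∀ x : EE (R := R) M N n, r • x = 0) (n : ℕ) :
    ∀ (A : Type u) [AddCommGroup A] [Module R A] [Module.Flat R A]
      (_ : ∀ j, Module.Projective (R ⧸ I j) ((R ⧸ I j) ⊗[R] A)),
      Function.Bijective (theta (R := R) A M N n) := by
  induction n with
  | zero => intro A _ _ _ _; exact theta_zero A M N
  | succ n ih =>
    have key : ∀ (A : Type u) [AddCommGroup A] [Module R A] [Module.Flat R A]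
      (_ : ∀ j, Module.Projective (R ⧸ I j) ((R ⧸ I j) ⊗[R] A))
      (P K : Type u) [AddCommGroup K] [Module R K] [AddCommGroup P] [Module R P]
      (_ : Module.Projective R P)
      (f : K →ₗ[R] P) (g : P →ₗ[R] A) (_ : Function.Injective f) (_ : Function.Surjective g)
      (_ : Function.Exact f g),
      Function.Injective (epre N (g.rTensor M) (n + 1)) := by
      intro A _ _ _ hA P K _ _ _ _ hP f g hf hg H
      have hf' : Function.Injective (f.rTensor M) := by
        have := LinearMap.lTensor_injective_of_exact_of_flat g hg f hf H M
        rwa [LinearMap.lTensor_inj_iff_rTensor_inj] at this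
      have hg' := LinearMap.rTensor_surjective M hg
      have H' := rTensor_exact M H hg
      have : Module.Flat R K := flat_ker hf hg H
      rw [injective_iff_map_eq_zero]
      intro x hx
      obtain ⟨y, rfl⟩ := (exact_del' N hf' hg' H' n x).1 hx
      obtain ⟨h', hh'⟩ := cond_ext _ (I n) (hI n) hf hg H (theta K M N n y)
      obtain ⟨z, rfl⟩ := (theta_proj P N n M).2 h'
      rw [← theta_natA] at hh'
      have := (ih K (fun j => cond_proj (I j) hf hg H)).1 hh'
      rw [← this]
      exact (exact_del N hf' hg' H' n _).2 ⟨z, rfl⟩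
    have keyinj : ∀ (A : Type u) [AddCommGroup A] [Module R A] [Module.Flat R A]
      (_ : ∀ j, Module.Projective (R ⧸ I j) ((R ⧸ I j) ⊗[R] A)),
      Function.Injective (theta (R := R) A M N (n + 1)) := by
      intro A _ _ _ hA
      obtain ⟨P, K, _, _, _, _, f, g, hP, hf, hg, H⟩ := exists_free_pres (R := R) A
      rw [injective_iff_map_eq_zero]
      intro x hx
      apply (injective_iff_map_eq_zero _).1 (key A hA P K hP f g hf hg H)
      apply (injective_iff_map_eq_zero _).1 (theta_proj P N (n + 1) M).1
      rw [theta_natA, hx, LinearMap.zero_comp]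
    intro A _ _ _ hA
    refine ⟨keyinj A hA, ?_⟩
    obtain ⟨P, K, _, _, _, _, f, g, hP, hf, hg, H⟩ := exists_free_pres (R := R) A
    have : Module.Flat R K := flat_ker hf hg H
    have hf' : Function.Injective (f.rTensor M) := by
      have := LinearMap.lTensor_injective_of_exact_of_flat g hg f hf H M
      rwa [LinearMap.lTensor_inj_iff_rTensor_inj] at this
    have hg' := LinearMap.rTensor_surjective M hg
    have H' := rTensor_exact M H hg
    intro l
    obtain ⟨y, hy⟩ := (theta_proj P N (n + 1) M).2 (l ∘ₗ g)
    have h0 : epre N (f.rTensor M) (n + 1) y = 0 := by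
      apply (injective_iff_map_eq_zero _).1 (keyinj K (fun j => cond_proj (I j) hf hg H))
      rw [theta_natA, hy, LinearMap.comp_assoc, H.linearMap_comp_eq_zero, LinearMap.comp_zero]
    obtain ⟨x, rfl⟩ := (exact_mid N hf' hg' H' (n + 1) y).1 h0
    refine ⟨x, ?_⟩
    rw [theta_natA] at hy
    ext a
    obtain ⟨p, rfl⟩ := hg a
    exact LinearMap.congr_fun hy p

end Cond

section Alg

variable {R S : Type u} [CommRing R] [CommRing S] [Algebra R S]
variable {L : Type u} [AddCommGroup L] [Module R L] [Module S L] [IsScalarTower R S L]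

lemma add_annihilator [IsLocalRing R] [IsNoetherianRing R] [Module.Finite R L]
    (hs : ∀ s : S, ∃ r : R, s - algebraMap R S r ∈
      (IsLocalRing.maximalIdeal R • ⊤ : Submodule R S)) (s : S) :
    ∃ r : R, ∀ x : L, (s - algebraMap R S r) • x = 0 := by
  let ψ : S →ₗ[R] Module.End R L := (Algebra.lsmul R R L).toLinearMap
  have hψ : ∀ s x, ψ s x = s • x := fun _ _ => rfl
  have key : LinearMap.range ψ ≤ Submodule.span R {ψ 1} := by
    apply Submodule.le_of_le_smul_of_le_jacobson_bot (I := IsLocalRing.maximalIdeal R)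
      (IsNoetherian.noetherian _) (IsLocalRing.maximalIdeal_le_jacobson _)
    rintro _ ⟨s, rfl⟩
    obtain ⟨r, hr⟩ := hs s
    have h1 : s = r • 1 + (s - algebraMap R S r) := by rw [Algebra.smul_def]; ring
    rw [h1, map_add, map_smul]
    refine Submodule.add_mem_sup ?_ ?_
    · exact Submodule.smul_mem _ _ (Submodule.mem_span_singleton_self _)
    · have := Submodule.mem_map_of_mem (f := ψ) hr
      rwa [Submodule.map_smul'', Submodule.map_top] at this
  obtain ⟨r, hr⟩ := Submodule.mem_span_singleton.1 (key ⟨s, rfl⟩)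
  refine ⟨r, fun x => ?_⟩
  have := LinearMap.congr_fun hr x
  rw [LinearMap.smul_apply, hψ, hψ, one_smul] at this
  rw [sub_smul, algebraMap_smul, this, sub_self]

lemma tmul_eq [IsLocalRing R] [IsLocalRing S] [IsLocalHom (algebraMap R S)] [IsNoetherianRing S]
    [Module.Finite R L]
    (hs : ∀ s : S, ∃ r : R, s - algebraMap R S r ∈
      (IsLocalRing.maximalIdeal R • ⊤ : Submodule R S)) (s : S) (x : L) :
    (s ⊗ₜ[R] x : S ⊗[R] L) = 1 ⊗ₜ[R] (s • x) := by
  let κ : L → S →ₗ[R] S ⊗[R] L := fun x =>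
    (TensorProduct.mk R S L).flip x - (TensorProduct.mk R S L 1) ∘ₗ
      ((Algebra.lsmul R R L).toLinearMap.flip x)
  have hκ : ∀ x s, κ x s = s ⊗ₜ[R] x - 1 ⊗ₜ[R] (s • x) := fun _ _ => rfl
  let K : Submodule S (S ⊗[R] L) := Submodule.span S {y | ∃ x s, κ x s = y}
  have hK : K ≤ IsLocalRing.maximalIdeal S • K := by
    apply Submodule.span_le.2
    rintro _ ⟨x, s, rfl⟩
    obtain ⟨r, hr⟩ := hs s
    have h1 : s = r • 1 + (s - algebraMap R S r) := by rw [Algebra.smul_def]; ring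
    have h2 : κ x (r • 1) = 0 := by
      rw [map_smul, hκ]; simp
    rw [h1, map_add, h2, zero_add]
    refine Submodule.smul_induction_on (p := fun t => κ x t ∈ IsLocalRing.maximalIdeal S • K)
      hr ?_ ?_
    · intro a ha y _
      rw [map_smul, ← algebraMap_smul S a (κ x y)]
      refine Submodule.smul_mem_smul ?_ (Submodule.subset_span ⟨x, y, rfl⟩)
      rw [IsLocalRing.mem_maximalIdeal, mem_nonunits_iff] at ha ⊢
      exact fun h => ha (isUnit_of_map_unit (algebraMap R S) a h)
    · intro a b ha hb
      rw [map_add]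
      exact Submodule.add_mem _ ha hb
  have hK0 : K = ⊥ := Submodule.eq_bot_of_le_smul_of_le_jacobson_bot _ _
    (IsNoetherian.noetherian K) hK (IsLocalRing.maximalIdeal_le_jacobson _)
  have : κ x s ∈ K := Submodule.subset_span ⟨x, s, rfl⟩
  rw [hK0, Submodule.mem_bot, hκ, sub_eq_zero] at this
  exact this

lemma mem_of_tmul_zero {T : Type u} [AddCommGroup T] [Module R T]
    [Module.Flat R S] [Module.Finite R T] (s : S)
    (h : ∀ x : T, (s ⊗ₜ[R] x : S ⊗[R] T) = 0) :
    s ∈ (Module.annihilator R T • ⊤ : Submodule R S) := by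
  obtain ⟨n, v, hv⟩ := Module.Finite.exists_fin (R := R) (M := T)
  let φ : R →ₗ[R] (Fin n → T) := LinearMap.toSpanSingleton R _ v
  have hker : ∀ r ∈ LinearMap.ker φ, r ∈ Module.annihilator R T := by
    intro r hr
    rw [LinearMap.mem_ker] at hr
    rw [Module.mem_annihilator]
    intro x
    have hx : x ∈ Submodule.span R (Set.range v) := hv ▸ Submodule.mem_top
    induction hx using Submodule.span_induction with
    | mem x hx =>
      obtain ⟨i, rfl⟩ := hx
      exact congrFun hr i
    | zero => simp
    | add x y _ _ h1 h2 => rw [smul_add, h1, h2, add_zero]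
    | smul a x _ h1 => rw [smul_comm, h1, smul_zero]
  have hex := Module.Flat.lTensor_exact S (LinearMap.exact_subtype_ker_map φ)
  have h0 : φ.lTensor S (s ⊗ₜ 1) = 0 := by
    rw [LinearMap.lTensor_tmul]
    have : φ 1 = ∑ i, LinearMap.single R (fun _ : Fin n => T) i (v i) := by
      simp only [φ, LinearMap.toSpanSingleton_apply, one_smul]
      exact (Finset.univ_sum_single v).symm
    rw [this, TensorProduct.tmul_sum]
    refine Finset.sum_eq_zero fun i _ => ?_
    rw [← LinearMap.lTensor_tmul, h, map_zero]
  obtain ⟨z, hz⟩ := (hex _).1 h0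
  have : ∀ z : S ⊗[R] LinearMap.ker φ, TensorProduct.rid R S
      ((LinearMap.ker φ).subtype.lTensor S z) ∈ (Module.annihilator R T • ⊤ : Submodule R S) := by
    intro z
    induction z with
    | zero => simp
    | add a b ha hb => rw [map_add, map_add]; exact Submodule.add_mem _ ha hb
    | tmul a b =>
      rw [LinearMap.lTensor_tmul, TensorProduct.rid_tmul]
      exact Submodule.smul_mem_smul (hker _ b.2) Submodule.mem_top
  have h2 := this z
  rw [hz, TensorProduct.rid_tmul, one_smul] at h2
  exact h2

lemma add_ann [IsLocalRing R] [IsLocalRing S] [IsLocalHom (algebraMap R S)]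
    [IsNoetherianRing R] [IsNoetherianRing S] [Module.Flat R S]
    [Module.Finite R L]
    (hs : ∀ s : S, ∃ r : R, s - algebraMap R S r ∈
      (IsLocalRing.maximalIdeal R • ⊤ : Submodule R S)) (s : S) :
    ∃ r : R, s - algebraMap R S r ∈ (Module.annihilator R L • ⊤ : Submodule R S) := by
  obtain ⟨r, hr⟩ := add_annihilator (L := L) hs s
  refine ⟨r, mem_of_tmul_zero (T := L) _ fun x => ?_⟩
  rw [tmul_eq hs, hr, TensorProduct.tmul_zero]

lemma proj_of_add_ann
    (hs : ∀ s : S, ∃ r : R, s - algebraMap R S r ∈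
      (Module.annihilator R L • ⊤ : Submodule R S)) :
    Module.Projective (R ⧸ Module.annihilator R L) ((R ⧸ Module.annihilator R L) ⊗[R] S) := by
  set I := Module.annihilator R L with hI
  let τ : (R ⧸ I) →ₗ[R ⧸ I] (R ⧸ I) ⊗[R] S := LinearMap.toSpanSingleton _ _ (1 ⊗ₜ 1)
  have hτ : ∀ b, τ b = b ⊗ₜ 1 := by
    intro b
    simp [τ, TensorProduct.smul_tmul']
  have inj : Function.Injective τ := by
    rw [injective_iff_map_eq_zero]
    intro b hb
    obtain ⟨r, rfl⟩ := Ideal.Quotient.mk_surjective b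
    rw [hτ] at hb
    let ψ : S →ₗ[R] Module.End R L := (Algebra.lsmul R R L).toLinearMap
    let u : (R ⧸ I) →ₗ[R] (S →ₗ[R] Module.End R L) :=
      Submodule.liftQ I (LinearMap.toSpanSingleton R _ ψ) (by
        intro r hr
        rw [LinearMap.mem_ker]
        ext s x
        exact Module.mem_annihilator.1 hr (s • x))
    have h1 := congrArg (TensorProduct.lift u) hb
    rw [TensorProduct.lift.tmul, map_zero] at h1
    rw [Ideal.Quotient.eq_zero_iff_mem, hI, Module.mem_annihilator]
    intro x
    have h2 := LinearMap.congr_fun h1 x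
    have h3 : u (Ideal.Quotient.mk I r) 1 x = r • ((1 : S) • x) := rfl
    rw [h3, one_smul] at h2
    exact h2
  have surj : Function.Surjective τ := by
    rw [← LinearMap.range_eq_top, eq_top_iff]
    rintro z -
    induction z with
    | zero => exact Submodule.zero_mem _
    | add a b ha hb => exact Submodule.add_mem _ ha hb
    | tmul b s =>
      obtain ⟨r, hr⟩ := hs s
      have h0 : (b ⊗ₜ[R] (s - algebraMap R S r) : (R ⧸ I) ⊗[R] S) = 0 := by
        refine Submodule.smul_induction_on
          (p := fun t => (b ⊗ₜ[R] t : (R ⧸ I) ⊗[R] S) = 0) hr ?_ ?_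
        · intro a ha y _
          rw [← TensorProduct.smul_tmul]
          have : a • b = 0 := by
            rw [Algebra.smul_def]
            rw [Ideal.Quotient.algebraMap_eq, Ideal.Quotient.eq_zero_iff_mem.2 ha, zero_mul]
          rw [this, TensorProduct.zero_tmul]
        · intro x y hx hy
          rw [TensorProduct.tmul_add, hx, hy, add_zero]
      rw [TensorProduct.tmul_sub, sub_eq_zero] at h0
      rw [h0, Algebra.algebraMap_eq_smul_one, ← TensorProduct.smul_tmul]
      exact ⟨r • b, hτ _⟩
  exact Module.Projective.of_equiv (LinearEquiv.ofBijective τ ⟨inj, surj⟩)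

/-- evaluation at one -/
lemma eval_one_bij
    (hs : ∀ s : S, ∃ r : R, s - algebraMap R S r ∈
      (Module.annihilator R L • ⊤ : Submodule R S)) :
    Function.Bijective (LinearMap.applyₗ (R := R) (1 : S) : (S →ₗ[R] L) →ₗ[R] L) := by
  constructor
  · rw [injective_iff_map_eq_zero]
    intro g hg
    ext s
    obtain ⟨r, hr⟩ := hs s
    have h0 : g (s - algebraMap R S r) = 0 := by
      refine Submodule.smul_induction_on (p := fun t => g t = 0) hr ?_ ?_
      · intro a ha y _
        rw [map_smul]
        exact Module.mem_annihilator.1 ha _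
      · intro x y hx hy
        rw [map_add, hx, hy, add_zero]
    rw [map_sub, sub_eq_zero] at h0
    rw [h0, Algebra.algebraMap_eq_smul_one, map_smul]
    rw [LinearMap.applyₗ_apply_apply] at hg
    rw [hg, smul_zero, LinearMap.zero_apply]
  · intro x
    exact ⟨(Algebra.lsmul R R L).toLinearMap.flip x, one_smul S x⟩

lemma hs_of_hres [IsLocalRing R] (hres : Function.Bijective
      (Ideal.quotientMap ((IsLocalRing.maximalIdeal R).map (algebraMap R S)) (algebraMap R S)
        Ideal.le_comap_map)) (s : S) : ∃ r : R, s - algebraMap R S r ∈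
      (IsLocalRing.maximalIdeal R • ⊤ : Submodule R S) := by
  obtain ⟨b, hb⟩ := hres.2 (Ideal.Quotient.mk _ s)
  obtain ⟨r, rfl⟩ := Ideal.Quotient.mk_surjective b
  refine ⟨r, ?_⟩
  rw [Ideal.quotientMap_mk, eq_comm, Ideal.Quotient.eq] at hb
  rw [Ideal.smul_top_eq_map]
  exact hb

end Alg

section Compare

variable {R : Type u} [CommRing R]

open CochainComplex CochainComplex.HomComplex ProjectiveResolution in
lemma extMk_zero_inj {X Y : ModuleCat.{u} R} (P : ProjectiveResolution X)
    (f : P.complex.X 0 ⟶ Y) (m : ℕ) (hm : 0 + 1 = m)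
    (hf : P.complex.d m 0 ≫ f = 0) (h : P.extMk f m hm hf = 0) : f = 0 := by
  simp only [← P.extEquivCohomologyClass.apply_eq_iff_eq,
    extEquivCohomologyClass_extMk, extEquivCohomologyClass_zero,
    CohomologyClass.mk_eq_zero_iff] at h
  rw [Cocycle.toSingleMk_mem_coboundaries_iff _ _ _ _ _ 1 (by simp)] at h
  obtain ⟨g, hg⟩ := h
  have hz : Limits.IsZero (P.cochainComplex.X 1) :=
    P.cochainComplex.isZero_of_isStrictlyLE 0 1
  rw [hz.eq_of_src g 0, Limits.comp_zero] at hg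
  rw [← cancel_epi (P.cochainComplexXIso (-(0 : ℕ)) 0 rfl).hom]
  simpa using hg.symm

lemma extMk_smul' {X Y : ModuleCat.{u} R} (P : ProjectiveResolution X) (n : ℕ) (r : R)
    (f : P.complex.X n ⟶ Y) (hf : P.complex.d (n + 1) n ≫ f = 0)
    (hf' : P.complex.d (n + 1) n ≫ (r • f) = 0) :
    P.extMk (r • f) (n + 1) rfl hf' = r • P.extMk f (n + 1) rfl hf := by
  rw [Abelian.Ext.smul_eq_comp_mk₀, P.extMk_comp_mk₀]
  congr 1

/-- The map from cocycles to `Ext`. -/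
noncomputable def cocyMap {X Y : ModuleCat.{u} R} (P : ProjectiveResolution X) (n : ℕ) :
    (LinearMap.ker ((P.complex.linearYonedaObj R Y).d n (n + 1)).hom) →ₗ[R]
      Abelian.Ext.{u} X Y n where
  toFun f := P.extMk (f.1 : P.complex.X n ⟶ Y) (n + 1) rfl f.2
  map_add' f g := (P.add_extMk _ _ _ _ _ _).symm
  map_smul' r f := extMk_smul' P n r f.1 f.2 (r • f).2

lemma homology_equiv (T : ShortComplex (ModuleCat.{u} R)) {E : Type u} [AddCommGroup E]
    [Module R E] (p : LinearMap.ker T.g.hom →ₗ[R] E) (hp : Function.Surjective p)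
    (hk : ∀ x, p x = 0 ↔ ∃ y, T.f.hom y = x.1) : Nonempty (T.homology ≃ₗ[R] E) := by
  have hk' : LinearMap.range T.moduleCatToCycles = LinearMap.ker p := by
    ext x
    rw [LinearMap.mem_ker, hk, LinearMap.mem_range]
    exact exists_congr fun y => Subtype.ext_iff
  have e1 : T.homology ≃ₗ[R] (LinearMap.ker T.g.hom ⧸ LinearMap.range T.moduleCatToCycles) :=
    T.moduleCatHomologyIso.toLinearEquiv
  exact ⟨e1.trans ((Submodule.quotEquivOfEq _ _ hk').trans
    (LinearMap.quotKerEquivOfSurjective p hp))⟩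

lemma cocyMap_surj {X Y : ModuleCat.{u} R} (P : ProjectiveResolution X) (n : ℕ) :
    Function.Surjective (cocyMap (Y := Y) P n) := by
  intro α
  obtain ⟨f, hf, rfl⟩ := P.extMk_surjective α (n + 1) rfl
  exact ⟨⟨f, hf⟩, rfl⟩

lemma compare (X Y : ModuleCat.{u} R) (n : ℕ) :
    Nonempty (((((Ext R (ModuleCat.{u} R) n).obj (Opposite.op X)).obj Y : ModuleCat.{u} R) ≃ₗ[R]
      Abelian.Ext.{u} X Y n)) := by
  let P := ProjectiveResolution.of X
  have e1 := (P.isoExt (R := R) n Y).toLinearEquiv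
  let C := P.complex.linearYonedaObj R Y
  suffices h : Nonempty ((C.homology n) ≃ₗ[R] Abelian.Ext.{u} X Y n) from
    ⟨e1.trans h.some⟩
  cases n with
  | zero =>
    have e2 := (C.homologyIsoSc' 0 0 1 (by exact CochainComplex.prev_nat_zero)
      (by exact CochainComplex.next ℕ 0)).toLinearEquiv
    obtain ⟨e3⟩ := homology_equiv (C.sc' 0 0 1) (cocyMap (Y := Y) P 0) (cocyMap_surj P 0) (by
      intro x
      constructor
      · intro hx
        refine ⟨0, ?_⟩
        rw [map_zero]
        exact (extMk_zero_inj P x.1 1 rfl x.2 hx).symm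
      · rintro ⟨y, hy⟩
        have h0 : C.d 0 0 = 0 := C.shape _ _ (by simp)
        have : x = 0 := by
          apply Subtype.ext
          rw [← hy]
          change (C.d 0 0).hom y = 0
          rw [h0]; rfl
        rw [this]
        exact map_zero (cocyMap (Y := Y) P 0))
    exact ⟨e2.trans e3⟩
  | succ n =>
    have e2 := (C.homologyIsoSc' n (n + 1) (n + 1 + 1) (by exact CochainComplex.prev_nat_succ n)
      (by exact CochainComplex.next ℕ (n + 1))).toLinearEquiv
    obtain ⟨e3⟩ := homology_equiv (C.sc' n (n + 1) (n + 1 + 1)) (cocyMap (Y := Y) P (n + 1))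
      (cocyMap_surj P (n + 1)) (by
        intro x
        exact P.extMk_eq_zero_iff x.1 (n + 1 + 1) rfl x.2 n rfl)
    exact ⟨e2.trans e3⟩

lemma transport_compat {S L L' : Type*} [CommRing S] [Algebra R S] [AddCommGroup L] [Module R L]
    [AddCommGroup L'] [Module R L'] (e : L ≃ₗ[R] L') (h : HasCompatibleSModule R S L) :
    ∃ (_ : Module S L'), IsScalarTower R S L' := by
  obtain ⟨inst, hinst⟩ := h
  letI : Module S L' := e.symm.toAddEquiv.module S
  refine ⟨this, IsScalarTower.of_algebraMap_smul fun r x => ?_⟩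
  have h1 : ∀ (s : S) (x : L'), s • x = e (s • e.symm x) := fun _ _ => rfl
  rw [h1]
  exact (congrArg e (hinst r _)).trans ((map_smul e r _).trans (by rw [e.apply_symm_apply]))

end Compare
/-- Let `φ : (R, m) → (S, n)` be a flat local homomorphism of commutative Noetherian local
rings such that `R/m → S/mS` is an isomorphism, and let `M`, `N` be finitely generated
`R`-modules. If `Ext^i_R(M, N)` has a compatible `S`-module structure for all `i ≥ 0`,
then for every `i ≥ 0` one has `Ext^i_R(S ⊗_R M, N) ≅ Ext^i_R(M, N)` as `R`-modules;
in particular `Ext^i_R(S ⊗_R M, N)` is finitely generated over `R`. -/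
theorem ext_baseChange_iso_of_hasCompatibleSModule
    (R S : Type u) [CommRing R] [CommRing S] [IsLocalRing R] [IsLocalRing S]
    [IsNoetherianRing R] [IsNoetherianRing S] [Algebra R S] [Module.Flat R S]
    [IsLocalHom (algebraMap R S)]
    (hres : Function.Bijective
      (Ideal.quotientMap ((IsLocalRing.maximalIdeal R).map (algebraMap R S)) (algebraMap R S)
        Ideal.le_comap_map))
    (M N : Type u) [AddCommGroup M] [Module R M] [Module.Finite R M]
    [AddCommGroup N] [Module R N] [Module.Finite R N]
    (h : ∀ i : ℕ, HasCompatibleSModule R S (extModule R M N i)) :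
    ∀ i : ℕ, Nonempty (extModule R (S ⊗[R] M) N i ≅ extModule R M N i) ∧
      Module.Finite R (extModule R (S ⊗[R] M) N i) := by
  have hs := hs_of_hres hres
  have key : ∀ j, ∃ (_ : Module S (EE (R := R) M N j)), IsScalarTower R S (EE (R := R) M N j) := by
    intro j
    obtain ⟨e⟩ := compare (ModuleCat.of R M) (ModuleCat.of R N) j
    exact transport_compat e (h j)
  choose instS tower using key
  have hs' : ∀ j, ∀ s : S, ∃ r : R, s - algebraMap R S r ∈
      (Module.annihilator R (EE (R := R) M N j) • ⊤ : Submodule R S) := by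
    intro j
    letI := instS j
    haveI := tower j
    exact add_ann hs
  have hp : ∀ j, Module.Projective (R ⧸ Module.annihilator R (EE (R := R) M N j))
      ((R ⧸ Module.annihilator R (EE (R := R) M N j)) ⊗[R] S) := by
    intro j
    exact proj_of_add_ann (hs' j)
  intro i
  have hb := theta_main M N (fun j => Module.annihilator R (EE (R := R) M N j))
    (fun n r hr x => Module.mem_annihilator.1 hr x) i S hp
  obtain ⟨e1⟩ := compare (ModuleCat.of R (S ⊗[R] M)) (ModuleCat.of R N) i
  obtain ⟨e2⟩ := compare (ModuleCat.of R M) (ModuleCat.of R N) i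
  letI := instS i
  haveI := tower i
  let e : extModule R (S ⊗[R] M) N i ≃ₗ[R] EE (R := R) M N i :=
    (e1.trans (LinearEquiv.ofBijective (theta (R := R) S M N i) hb)).trans
      (LinearEquiv.ofBijective _ (eval_one_bij (hs' i)))
  have : Module.Finite R (EE (R := R) M N i) := inferInstance
  exact ⟨⟨(e.trans e2.symm).toModuleIso⟩, Module.Finite.equiv e.symm⟩
end
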